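/- arXiv:2209.03852 — 2 statements merged into one kernel-verified Lean document; each statement's English description precedes it below -/
import Mathlib

section
/- Let H²_β be a weighted Hardy space of polynomial growth. Then for every φ ∈ Aut(𝔻), the composition operator C_φ : H²_β → H²_β is a bounded invertible operator; consequently the multiplication operator M_z is similar to M_φ on H²_β (i.e. M_z is weakly homogeneous on H²_β). -/
noncomputable section

open Complex Filter Topology

/-- The sequence-space (ℓ²) model of a weighted Hardy space `H²_β`.
An element `a : H2` represents the analytic function whose `k`-th Taylor
coefficient is `a k / β k` (so that `‖a‖` is exactly the `H²_β`-norm). -/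
abbrev H2 : Type := lp (fun _ : ℕ => ℂ) 2

/-- The direct sum (ℓ²-sense) of `m` copies of `H2`. -/
abbrev Hm (m : ℕ) : Type := PiLp 2 (fun _ : Fin m => H2)

/-- The open unit disk 𝔻 ⊆ ℂ. -/
def unitDisk : Set ℂ := Metric.ball 0 1

/-- `β_0 = 1` and `β_k = ∏_{j=1}^k w_j`. -/
def betaSeq (w : ℕ → ℝ) (k : ℕ) : ℝ := ∏ j ∈ Finset.Icc 1 k, w j

/-- The analytic function on 𝔻 represented by the vector `a` in the model of `H²_β`:
`f(z) = ∑_k (a k / β k) z^k`. -/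
def repFun (β : ℕ → ℝ) (a : H2) (z : ℂ) : ℂ := ∑' k, (a k / (β k : ℂ)) * z ^ k

/-- `T` is (the ℓ²-model of) the multiplication operator `M_g` on `H²_β`.
Existence of such a `T` says precisely that `M_g` is bounded on `H²_β`. -/
def RepMul (β : ℕ → ℝ) (g : ℂ → ℂ) (T : H2 →L[ℂ] H2) : Prop :=
  ∀ a : H2, ∀ z ∈ unitDisk, repFun β (T a) z = g z * repFun β a z

/-- `T` is (the ℓ²-model of) the composition operator `C_ψ` on `H²_β`.
Existence of such a `T` says precisely that `C_ψ` is bounded on `H²_β`. -/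
def RepComp (β : ℕ → ℝ) (ψ : ℂ → ℂ) (T : H2 →L[ℂ] H2) : Prop :=
  ∀ a : H2, ∀ z ∈ unitDisk, repFun β (T a) z = repFun β a (ψ z)

/-- The Möbius factor `φ_{z₀}(z) = (z₀ - z)/(1 - conj z₀ · z)`. -/
def mobius (z₀ z : ℂ) : ℂ := (z₀ - z) / (1 - (starRingEnd ℂ) z₀ * z)

/-- `φ` belongs to `Aut(𝔻)`, i.e. `φ(z) = e^{iθ}(z₀ - z)/(1 - conj z₀ · z)`. -/
def IsDiskAut (φ : ℂ → ℂ) : Prop :=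
  ∃ (θ : ℝ) (z₀ : ℂ), z₀ ∈ unitDisk ∧
    ∀ z, φ z = Complex.exp (θ * Complex.I) * mobius z₀ z

/-- `B` is a finite Blaschke product of order `m`. -/
def IsBlaschke (m : ℕ) (B : ℂ → ℂ) : Prop :=
  ∃ (θ : ℝ) (zs : Fin m → ℂ), (∀ j, zs j ∈ unitDisk) ∧
    ∀ z, B z = Complex.exp (θ * Complex.I) * ∏ j, mobius (zs j) z

/-- `w` is a positive weight sequence tending to `1` such that the weighted Hardy
space `H²_β` is of polynomial growth: `sup_k (k+1)|w_k - 1| < ∞`. -/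
def PolyGrowth (w : ℕ → ℝ) : Prop :=
  (∀ k, 1 ≤ k → 0 < w k) ∧ Tendsto w atTop (nhds 1) ∧
    ∃ M : ℝ, ∀ k : ℕ, 1 ≤ k → ((k : ℝ) + 1) * |w k - 1| ≤ M

/-- `f` is analytic on an open neighbourhood of the closed unit disk. -/
def AnalyticOnClosedDisk (f : ℂ → ℂ) : Prop :=
  ∃ U : Set ℂ, IsOpen U ∧ Metric.closedBall (0:ℂ) 1 ⊆ U ∧ AnalyticOnNhd ℂ f U

open Polynomial in
/-- shifted coefficients of `((z+X)/(1+Xz))^n` -/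
def dP : ℕ → ℕ → Polynomial ℝ
  | _, 0 => 0
  | 0, 1 => 1
  | 0, _ + 2 => 0
  | n + 1, k + 1 => -Polynomial.X * dP (n + 1) k + dP n k + Polynomial.X * dP n (k + 1)

lemma dP_zero (n : ℕ) : dP n 0 = 0 := by cases n <;> simp [dP]

lemma dP_rec (n k : ℕ) : dP (n+1) (k+1) =
    -Polynomial.X * dP (n + 1) k + dP n k + Polynomial.X * dP n (k + 1) := by
  rw [dP]

open Polynomial in
lemma dP_ode (n : ℕ) : ∀ k : ℕ, (1 - X^2) * derivative (dP n (k+1)) =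
    ((k:ℝ[X])+1) * dP n (k+2) - ((k:ℝ[X])-1) * dP n k := by
  induction n with
  | zero =>
    intro k
    rcases k with _ | _ | k
    · simp [dP]
    · simp [dP]
    · simp [dP]
  | succ n ih =>
    intro k
    induction k with
    | zero =>
      have h0 := ih 0
      have e1 := dP_rec n 0
      have e2 := dP_rec n 1
      rw [dP_zero] at e1 h0
      rw [dP_zero] at e1
      have e1' : dP (n+1) 1 = X * dP n 1 := by rw [e1]; ring
      simp only [zero_add] at *
      rw [dP_zero, e2, e1']
      simp only [derivative_mul, derivative_X]
      simp at h0 ⊢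
      linear_combination X * h0
    | succ k ihk =>
      have e0 := dP_rec n k
      have e1 := dP_rec n (k+1)
      have e2 := dP_rec n (k+2)
      have e1' := congrArg derivative e1
      simp only [derivative_mul, derivative_X, derivative_add, derivative_neg] at e1'
      have i0 := ih k
      have i1 := ih (k+1)
      push_cast at *
      rw [show k+1+1 = k+2 from rfl, show k+1+2=k+3 from rfl] at *
      rw [show k+2+1 = k+3 from rfl] at *
      linear_combination (1 - X^2) * e1' - (k+2) * e2 + (k) * e0 - e0 + X * e1 - X * ihk + i0 + X * i1

lemma dP_eval_zero (n : ℕ) : ∀ k, (dP n (k+1)).eval 0 = if k = n then 1 else 0 := by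
  induction n with
  | zero =>
    intro k
    rcases k with _ | k <;> simp [dP]
  | succ n ih =>
    intro k
    rw [dP_rec]
    rcases k with _ | k
    · simp [dP_zero]
    · simp [ih]

lemma dP_bound (ρ σ : ℝ) (h0 : 0 ≤ ρ) (h1 : ρ < σ) (h2 : σ < 1) (n : ℕ) :
    ∃ K : ℝ, 0 ≤ K ∧ ∀ r, 0 ≤ r → r ≤ ρ → ∀ k, |(dP n k).eval r| ≤ K * σ ^ k := by
  have hσ : 0 < σ := lt_of_le_of_lt h0 h1
  induction n with
  | zero =>
    refine ⟨1/σ, by positivity, fun r _ _ k => ?_⟩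
    rcases k with _ | _ | k
    · simp [dP]; positivity
    · simp [dP]; field_simp; rfl
    · simp [dP]; positivity
  | succ n ih =>
    obtain ⟨K, hK, h⟩ := ih
    have hd : 0 < σ - ρ := by linarith
    refine ⟨2 * K / (σ - ρ), by positivity, fun r hr hr' k => ?_⟩
    induction k with
    | zero => rw [dP_zero]; simp; positivity
    | succ k ihk =>
      rw [dP_rec]
      simp only [Polynomial.eval_add, Polynomial.eval_mul, Polynomial.eval_neg, Polynomial.eval_X]
      have a0 := h r hr hr' k
      have a1 := h r hr hr' (k+1)
      have t : |-r * (dP (n+1) k).eval r + (dP n k).eval r + r * (dP n (k+1)).eval r| ≤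
          r * |(dP (n+1) k).eval r| + |(dP n k).eval r| + r * |(dP n (k+1)).eval r| := by
        refine (abs_add_le _ _).trans ?_
        refine add_le_add ((abs_add_le _ _).trans ?_) ?_
        · rw [abs_mul, abs_neg, abs_of_nonneg hr]
        · rw [abs_mul, abs_of_nonneg hr]
      have hp : 0 < σ ^ k := by positivity
      have b0 : r * |(dP (n+1) k).eval r| ≤ ρ * (2 * K / (σ - ρ) * σ^k) :=
        mul_le_mul hr' ihk (abs_nonneg _) h0
      have b1 : r * |(dP n (k+1)).eval r| ≤ 1 * (K * σ^k) := by
        refine mul_le_mul (by linarith) (a1.trans ?_) (abs_nonneg _) (by norm_num)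
        rw [pow_succ]
        have : K * (σ^k * σ) = (K * σ^k) * σ := by ring
        rw [this]
        exact mul_le_of_le_one_right (by positivity) h2.le
      have e : 2 * K / (σ - ρ) * σ^(k+1) = ρ * (2 * K / (σ - ρ) * σ^k) + 2 * K * σ^k := by
        field_simp; ring
      rw [e]; linarith

lemma beta_succ (w : ℕ → ℝ) (k : ℕ) : betaSeq w (k+1) = betaSeq w k * w (k+1) := by
  unfold betaSeq
  rw [Finset.prod_Icc_succ_top (by omega)]

lemma beta_pos {w : ℕ → ℝ} (hw : PolyGrowth w) (k : ℕ) : 0 < betaSeq w k :=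
  Finset.prod_pos fun j hj => hw.1 j (Finset.mem_Icc.1 hj).1

lemma w_upper {w : ℕ → ℝ} (hw : PolyGrowth w) : ∃ W, 0 ≤ W ∧ ∀ k, w (k+1) ≤ W := by
  obtain ⟨W, hW⟩ := hw.2.1.bddAbove_range
  refine ⟨W, ?_, fun k => hW ⟨_, rfl⟩⟩
  exact (hw.1 1 le_rfl).le.trans (hW ⟨1, rfl⟩)

lemma w_inv_upper {w : ℕ → ℝ} (hw : PolyGrowth w) : ∃ W, 0 ≤ W ∧ ∀ k, (w (k+1))⁻¹ ≤ W := by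
  have h := hw.2.1.inv₀ one_ne_zero
  obtain ⟨W, hW⟩ := h.bddAbove_range
  refine ⟨W, ?_, fun k => hW ⟨_, rfl⟩⟩
  exact (inv_pos.2 (hw.1 1 le_rfl)).le.trans (hW ⟨1, rfl⟩)

lemma comm_bound {w : ℕ → ℝ} (hw : PolyGrowth w) : ∃ C, 0 ≤ C ∧ ∀ k : ℕ,
    |((k:ℝ)+1) * betaSeq w k ^ 2 - k * betaSeq w (k+1) ^ 2| ≤
      C * (betaSeq w k * betaSeq w (k+1)) := by
  obtain ⟨V, hV0, hV⟩ := w_inv_upper hw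
  obtain ⟨M, hM⟩ := hw.2.2
  have hM0 : 0 ≤ M := le_trans (by positivity) (hM 1 le_rfl)
  refine ⟨V + M * (V + 1), by positivity, fun k => ?_⟩
  have hwp := hw.1 (k+1) (by omega)
  have hb := beta_pos hw k
  rw [beta_succ]
  set v := w (k+1) with hv
  set b := betaSeq w k
  have h1 : ((k:ℝ)+1) * b ^ 2 - k * (b * v) ^ 2 = (b * (b * v)) * (v⁻¹ + k * (1 - v) * (v⁻¹ + 1)) := by
    field_simp; ring
  rw [h1, abs_mul, abs_of_pos (by positivity), mul_comm]
  refine mul_le_mul_of_nonneg_right ?_ (by positivity)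
  have hVk := hV k
  have hi : 0 < v⁻¹ := by positivity
  have hm := hM (k+1) (by omega)
  push_cast at hm
  have h2 : |(k:ℝ) * (1 - v)| ≤ M := by
    rw [abs_mul, abs_of_nonneg (by positivity : (0:ℝ) ≤ k), abs_sub_comm]
    refine le_trans ?_ hm
    exact mul_le_mul_of_nonneg_right (by linarith) (abs_nonneg _)
  refine (abs_add_le _ _).trans (add_le_add ?_ ?_)
  · rw [abs_of_pos hi]; exact hVk
  · rw [abs_mul, abs_of_pos (by positivity : 0 < v⁻¹ + 1)]
    exact mul_le_mul h2 (by linarith) (by positivity) hM0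

lemma beta_sum {w : ℕ → ℝ} (hw : PolyGrowth w) {q : ℝ} (hq : 0 < q) (hq1 : q < 1) :
    Summable fun k => betaSeq w k * q ^ k := by
  refine summable_of_ratio_test_tendsto_lt_one hq1 (Eventually.of_forall fun k =>
    (mul_pos (beta_pos hw k) (by positivity)).ne') ?_
  have : (fun n => ‖betaSeq w (n+1) * q ^ (n+1)‖ / ‖betaSeq w n * q ^ n‖) =
      fun n => w (n+1) * q := by
    funext n
    have h1 := beta_pos hw n
    have h2 := hw.1 (n+1) (by omega)
    rw [beta_succ, Real.norm_of_nonneg (by positivity), Real.norm_of_nonneg (by positivity)]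
    rw [pow_succ]; field_simp
  rw [this]
  simpa using ((tendsto_add_atTop_iff_nat 1).2 hw.2.1).mul_const q

lemma beta_inv_sum {w : ℕ → ℝ} (hw : PolyGrowth w) {q : ℝ} (hq : 0 ≤ q) (hq1 : q < 1) :
    Summable fun k => (betaSeq w k)⁻¹ * q ^ k := by
  have key : ∀ q : ℝ, 0 < q → q < 1 → Summable fun k => (betaSeq w k)⁻¹ * q ^ k := by
    intro q hq hq1
    refine summable_of_ratio_test_tendsto_lt_one hq1 (Eventually.of_forall fun k =>
      (mul_pos (inv_pos.2 (beta_pos hw k)) (by positivity)).ne') ?_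
    have : (fun n => ‖(betaSeq w (n+1))⁻¹ * q ^ (n+1)‖ / ‖(betaSeq w n)⁻¹ * q ^ n‖) =
        fun n => (w (n+1))⁻¹ * q := by
      funext n
      have h1 := beta_pos hw n
      have h2 := hw.1 (n+1) (by omega)
      rw [beta_succ, Real.norm_of_nonneg (by positivity), Real.norm_of_nonneg (by positivity)]
      rw [pow_succ]; field_simp
    rw [this]
    simpa using (((tendsto_add_atTop_iff_nat 1).2 hw.2.1).inv₀ one_ne_zero).mul_const q
  refine Summable.of_nonneg_of_le (fun k => mul_nonneg (inv_pos.2 (beta_pos hw k)).le (by positivity))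
    (fun k => ?_) (key ((q+1)/2) (by linarith) (by linarith))
  exact mul_le_mul_of_nonneg_left (pow_le_pow_left₀ hq (by linarith) k) (inv_pos.2 (beta_pos hw k)).le

/-- summation by parts -/
lemma energy_id (b a : ℕ → ℝ) (ha : a 0 = 0) (N : ℕ) :
    ∑ k ∈ Finset.range (N+1), b k * (2 * a (k+1) * (((k:ℝ)+1) * a (k+2) - ((k:ℝ)-1) * a k)) =
    ∑ k ∈ Finset.range N, 2 * (a (k+1) * a (k+2)) * (((k:ℝ)+1) * b k - k * b (k+1))
      + 2 * ((N:ℝ)+1) * b N * a (N+1) * a (N+2) := by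
  induction N with
  | zero => simp [ha]; ring
  | succ N ih =>
    rw [Finset.sum_range_succ, ih, Finset.sum_range_succ]
    push_cast
    ring

lemma energy_le (β a : ℕ → ℝ) (C : ℝ) (hC : 0 ≤ C)
    (h : ∀ k : ℕ, |((k:ℝ)+1) * β k ^ 2 - k * β (k+1) ^ 2| ≤ C * (β k * β (k+1)))
    (N : ℕ) :
    ∑ k ∈ Finset.range N, 2 * (a (k+1) * a (k+2)) * (((k:ℝ)+1) * β k ^ 2 - k * β (k+1) ^ 2)
      ≤ 2 * C * ∑ k ∈ Finset.range (N+1), β k ^ 2 * a (k+1) ^ 2 := by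
  have h1 : ∀ k ∈ Finset.range N, 2 * (a (k+1) * a (k+2)) * (((k:ℝ)+1) * β k ^ 2 - k * β (k+1) ^ 2)
      ≤ C * (β k ^ 2 * a (k+1) ^ 2) + C * (β (k+1) ^ 2 * a (k+2) ^ 2) := by
    intro k _
    refine (le_abs_self _).trans ?_
    rw [abs_mul, abs_mul, abs_mul, abs_two]
    have h2 := mul_le_mul_of_nonneg_left (h k) (by positivity : 0 ≤ 2 * (|a (k+1)| * |a (k+2)|))
    refine h2.trans ?_
    have e1 : β k ^ 2 * a (k+1) ^ 2 = (β k * |a (k+1)|) ^ 2 := by rw [mul_pow, sq_abs]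
    have e2 : β (k+1) ^ 2 * a (k+2) ^ 2 = (β (k+1) * |a (k+2)|) ^ 2 := by rw [mul_pow, sq_abs]
    rw [e1, e2]
    nlinarith [mul_nonneg hC (sq_nonneg (β k * |a (k+1)| - β (k+1) * |a (k+2)|))]
  refine (Finset.sum_le_sum h1).trans ?_
  rw [Finset.sum_add_distrib, ← Finset.mul_sum, ← Finset.mul_sum]
  have h3 : ∑ k ∈ Finset.range N, β k ^ 2 * a (k+1) ^ 2 ≤
      ∑ k ∈ Finset.range (N+1), β k ^ 2 * a (k+1) ^ 2 := by
    rw [Finset.sum_range_succ]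
    have : 0 ≤ β N ^ 2 * a (N+1) ^ 2 := by positivity
    linarith
  have h4 : ∑ k ∈ Finset.range N, β (k+1) ^ 2 * a (k+2) ^ 2 ≤
      ∑ k ∈ Finset.range (N+1), β k ^ 2 * a (k+1) ^ 2 := by
    rw [Finset.sum_range_succ']
    have : 0 ≤ β 0 ^ 2 * a (0+1) ^ 2 := by positivity
    linarith
  nlinarith [mul_le_mul_of_nonneg_left h3 hC, mul_le_mul_of_nonneg_left h4 hC]

/-- main real estimate -/
lemma main_real {w : ℕ → ℝ} (hw : PolyGrowth w) (ρ : ℝ) (h0 : 0 ≤ ρ) (h1 : ρ < 1) :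
    ∃ C : ℝ, 0 ≤ C ∧ ∀ (s : Finset ℕ) (x : ℕ → ℝ) (N : ℕ),
      ∑ k ∈ Finset.range N, betaSeq w k ^ 2 * (∑ n ∈ s, x n * (dP n (k+1)).eval ρ) ^ 2 ≤
        C * ∑ n ∈ s, betaSeq w n ^ 2 * x n ^ 2 := by
  obtain ⟨C, hC, hCb⟩ := comm_bound hw
  set L : ℝ := (1 - ρ^2)⁻¹ with hL
  have hρ2 : 0 < 1 - ρ^2 := by nlinarith
  have hL0 : 0 < L := by positivity
  refine ⟨Real.exp (2 * C * L * ρ), by positivity, fun s x N₀ => ?_⟩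
  -- choose `t`
  obtain ⟨t, ht1, ht2⟩ := exists_between (show Real.sqrt ρ < 1 by
    rw [Real.sqrt_lt' one_pos]; simpa using h1)
  have ht0 : 0 < t := lt_of_le_of_lt (Real.sqrt_nonneg _) ht1
  have htρ : ρ < t^2 := (Real.sqrt_lt' ht0).1 ht1
  have ht3 : t^2 < 1 := by nlinarith
  choose K hK0 hK using dP_bound ρ (t^2) h0 htρ ht3
  set P : ℕ → Polynomial ℝ := fun k => ∑ n ∈ s, Polynomial.C (x n) * dP n k with hP
  have hPe : ∀ k r, (P k).eval r = ∑ n ∈ s, x n * (dP n k).eval r := by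
    intro k r; simp [hP, Polynomial.eval_finsetSum]
  have hP0 : P 0 = 0 := by simp [hP, dP_zero]
  have hode : ∀ k r, (1 - r^2) * (Polynomial.derivative (P (k+1))).eval r =
      ((k:ℝ)+1) * (P (k+2)).eval r - ((k:ℝ)-1) * (P k).eval r := by
    intro k r
    have : (1 - Polynomial.X^2) * Polynomial.derivative (P (k+1)) =
      ((k:Polynomial ℝ)+1) * (P (k+2)) - ((k:Polynomial ℝ)-1) * P k := by
      simp only [hP, Polynomial.derivative_sum, Finset.mul_sum, ← Finset.sum_sub_distrib]
      refine Finset.sum_congr rfl fun n _ => ?_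
      rw [Polynomial.derivative_C_mul]
      linear_combination Polynomial.C (x n) * dP_ode n k
    simpa using congrArg (Polynomial.eval r) this
  set κ : ℝ := ∑ n ∈ s, |x n| * K n with hκ
  have hκ0 : 0 ≤ κ := Finset.sum_nonneg fun n _ => mul_nonneg (abs_nonneg _) (hK0 n)
  have hPb : ∀ r, 0 ≤ r → r ≤ ρ → ∀ k, |(P k).eval r| ≤ κ * (t^2)^k := by
    intro r hr hr' k
    rw [hPe, hκ, Finset.sum_mul]
    refine (Finset.abs_sum_le_sum_abs _ _).trans (Finset.sum_le_sum fun n _ => ?_)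
    rw [abs_mul, mul_assoc]
    exact mul_le_mul_of_nonneg_left (hK n r hr hr' k) (abs_nonneg _)
  set ε : ℕ → ℝ := fun N => 2 * ((N:ℝ)+1) * betaSeq w N ^ 2 * (κ * (t^2)^(N+1)) * (κ * (t^2)^(N+2)) with hε
  have hε0 : ∀ N, 0 ≤ ε N := fun N => by
    simp only [hε]; positivity
  have hεt : Tendsto (fun N => L * ε N) atTop (𝓝 0) := by
    have hb := (beta_sum hw ht0 ht2).tendsto_atTop_zero
    have hn : Tendsto (fun N : ℕ => ((N+1 : ℕ):ℝ) * (t^2)^(N+1)) atTop (𝓝 0) :=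
      (tendsto_add_atTop_iff_nat 1).2 (tendsto_self_mul_const_pow_of_lt_one (by positivity) ht3)
    have := ((hb.mul hb).mul hn).const_mul (L * 2 * κ^2 * t^4)
    simp only [mul_zero] at this
    refine this.congr fun N => ?_
    simp only [hε]
    push_cast
    ring
  set S : ℕ → Polynomial ℝ := fun N => ∑ k ∈ Finset.range N,
    Polynomial.C (betaSeq w k ^ 2) * P (k+1) ^ 2 with hS
  have hSe : ∀ N r, (S N).eval r = ∑ k ∈ Finset.range N, betaSeq w k ^ 2 * (P (k+1)).eval r ^ 2 := by
    intro N r; simp [hS, Polynomial.eval_finsetSum]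
  have hS0 : ∀ N r, 0 ≤ (S N).eval r := by
    intro N r; rw [hSe]; exact Finset.sum_nonneg fun k _ => by positivity
  have hSd : ∀ N r, 0 ≤ r → r ≤ ρ → (Polynomial.derivative (S (N+1))).eval r ≤
      2 * C * L * (S (N+1)).eval r + L * ε N := by
    intro N r hr hr'
    have hr2 : 0 < 1 - r^2 := by nlinarith
    have e : (1 - r^2) * (Polynomial.derivative (S (N+1))).eval r ≤
        2 * C * (S (N+1)).eval r + ε N := by
      have e1 : (1 - r^2) * (Polynomial.derivative (S (N+1))).eval r =
        ∑ k ∈ Finset.range (N+1), betaSeq w k ^ 2 * (2 * (P (k+1)).eval r *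
          (((k:ℝ)+1) * (P (k+2)).eval r - ((k:ℝ)-1) * (P k).eval r)) := by
        simp only [hS, Polynomial.derivative_sum, Polynomial.eval_finsetSum, Finset.mul_sum]
        refine Finset.sum_congr rfl fun k _ => ?_
        rw [← hode]
        simp only [Polynomial.derivative_C_mul, Polynomial.derivative_pow, Polynomial.eval_mul,
          Polynomial.eval_C, Polynomial.eval_pow]
        simp
        ring
      rw [e1, energy_id (fun k => betaSeq w k ^ 2) (fun k => (P k).eval r) (by simp [hP0]), hSe]
      refine add_le_add (energy_le (betaSeq w) (fun k => (P k).eval r) C hC hCb N) ?_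
      have b1 := hPb r hr hr' (N+1)
      have b2 := hPb r hr hr' (N+2)
      simp only [hε]
      refine (le_abs_self _).trans ?_
      rw [abs_mul, abs_mul, abs_of_nonneg (by positivity : 0 ≤ 2 * ((N:ℝ)+1) * betaSeq w N ^ 2)]
      gcongr
    have hLr : (1 - r^2)⁻¹ ≤ L := by
      rw [hL]; apply inv_anti₀ hρ2; nlinarith
    have hnn : 0 ≤ 2 * C * (S (N+1)).eval r + ε N :=
      add_nonneg (mul_nonneg (by positivity) (hS0 _ _)) (hε0 N)
    calc (Polynomial.derivative (S (N+1))).eval r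
        = (1 - r^2)⁻¹ * ((1 - r^2) * (Polynomial.derivative (S (N+1))).eval r) := by
          field_simp
      _ ≤ (1 - r^2)⁻¹ * (2 * C * (S (N+1)).eval r + ε N) :=
          mul_le_mul_of_nonneg_left e (by positivity)
      _ ≤ L * (2 * C * (S (N+1)).eval r + ε N) := mul_le_mul_of_nonneg_right hLr hnn
      _ = _ := by ring
  set δ : ℝ := ∑ n ∈ s, betaSeq w n ^ 2 * x n ^ 2 with hδ
  have hinit : ∀ N, (S N).eval 0 ≤ δ := by
    intro N
    rw [hSe]
    have : ∀ k ∈ Finset.range N, betaSeq w k ^ 2 * (P (k+1)).eval 0 ^ 2 =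
        if k ∈ s then betaSeq w k ^ 2 * x k ^ 2 else 0 := by
      intro k _
      rw [hPe]
      simp only [dP_eval_zero]
      by_cases hk : k ∈ s <;> simp [hk]
    rw [Finset.sum_congr rfl this, ← Finset.sum_filter, hδ]
    refine Finset.sum_le_sum_of_subset_of_nonneg ?_ (fun _ _ _ => by positivity)
    intro k hk
    exact (Finset.mem_filter.1 hk).2
  have hgr : ∀ N, (S (N+1)).eval ρ ≤ gronwallBound δ (2 * C * L) (L * ε N) ρ := by
    intro N
    have := le_gronwallBound_of_liminf_deriv_right_le (f := fun r => (S (N+1)).eval r)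
      (f' := fun r => (Polynomial.derivative (S (N+1))).eval r) (δ := δ) (K := 2 * C * L)
      (ε := L * ε N) (a := 0) (b := ρ) (Polynomial.continuous _).continuousOn
      (fun r _ q hq => ((S (N+1)).hasDerivAt r).hasDerivWithinAt.liminf_right_slope_le hq)
      (hinit _) (fun r hr => hSd N r hr.1 hr.2.le) ρ ⟨h0, le_rfl⟩
    simpa using this
  have hlim : Tendsto (fun N => gronwallBound δ (2 * C * L) (L * ε N) ρ) atTop
      (𝓝 (δ * Real.exp (2 * C * L * ρ))) := by
    rw [← gronwallBound_ε0]
    exact ((gronwallBound_continuous_ε δ (2 * C * L) ρ).tendsto 0).comp hεt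
  simp only [← hPe]
  rw [← hSe, mul_comm]
  refine ge_of_tendsto hlim ?_
  filter_upwards [eventually_ge_atTop N₀] with N hN
  refine le_trans ?_ (hgr N)
  rw [hSe, hSe]
  refine Finset.sum_le_sum_of_subset_of_nonneg ?_ (fun _ _ _ => by positivity)
  exact Finset.range_subset_range.2 (by omega)

lemma dP_genfun (ρ : ℝ) (h0 : 0 ≤ ρ) (h1 : ρ < 1) (z : ℂ) (hz : ‖z‖ < 1) (n : ℕ) :
    HasSum (fun k => (((dP n (k+1)).eval ρ : ℝ) : ℂ) * z ^ k) (((ρ + z) / (1 + ρ * z)) ^ n) := by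
  have hden : (1 + ρ * z : ℂ) ≠ 0 := by
    intro h
    have h2 : (ρ * z : ℂ) = -1 := by linear_combination h
    have h3 := congrArg norm h2
    rw [norm_mul, norm_neg, norm_one, Complex.norm_real, Real.norm_of_nonneg h0] at h3
    nlinarith [norm_nonneg z]
  have hsum : ∀ n, Summable (fun k => (((dP n (k+1)).eval ρ : ℝ) : ℂ) * z ^ k) := by
    intro n
    obtain ⟨σ, hs1, hs2⟩ := exists_between h1
    obtain ⟨K, hK, hb⟩ := dP_bound ρ σ h0 hs1 hs2 n
    refine Summable.of_norm_bounded
      ((summable_geometric_of_lt_one (norm_nonneg z) hz).mul_left K) fun k => ?_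
    rw [norm_mul, norm_pow, Complex.norm_real]
    refine mul_le_mul_of_nonneg_right ((hb ρ h0 le_rfl (k+1)).trans ?_) (by positivity)
    exact mul_le_of_le_one_right hK (pow_le_one₀ (by linarith) hs2.le)
  induction n with
  | zero =>
    have : (fun k => (((dP 0 (k+1)).eval ρ : ℝ) : ℂ) * z ^ k) = fun k => if k = 0 then 1 else 0 := by
      funext k
      rcases k with _ | k <;> simp [dP]
    rw [this, pow_zero]
    exact hasSum_ite_eq 0 1
  | succ n ih =>
    have hs := (hsum (n+1)).hasSum
    set F := ∑' k, (((dP (n+1) (k+1)).eval ρ : ℝ) : ℂ) * z ^ k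
    set G := ((ρ + z : ℂ) / (1 + ρ * z)) ^ n with hG
    -- shifted sums
    have shift : ∀ (m : ℕ) (A : ℂ), HasSum (fun k => (((dP m (k+1)).eval ρ : ℝ) : ℂ) * z ^ k) A →
        HasSum (fun k => (((dP m k).eval ρ : ℝ) : ℂ) * z ^ k) (z * A) := by
      intro m A hA
      have : HasSum (fun k => (((dP m (k+1)).eval ρ : ℝ) : ℂ) * z ^ (k+1)) (z * A) := by
        refine (hA.mul_left z).congr_fun ?_ |> id
        intro k; ring
      have h := (hasSum_nat_add_iff (f := fun k => (((dP m k).eval ρ : ℝ) : ℂ) * z ^ k) 1).1 this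
      simpa [dP_zero] using h
    have e := (((shift _ _ hs).mul_left (-(ρ:ℂ))).add (shift _ _ ih)).add (ih.mul_left (ρ:ℂ))
    have e2 := hs.unique (e.congr_fun (g := fun k => (((dP (n+1) (k+1)).eval ρ : ℝ) : ℂ) * z ^ k) ?_)
    · have : F = ((ρ + z : ℂ) / (1 + ρ * z)) ^ (n+1) := by
        rw [pow_succ, ← hG]
        field_simp
        linear_combination e2
      rw [← this]; exact hs
    · intro k
      rw [dP_rec]
      push_cast [Polynomial.eval_add, Polynomial.eval_mul, Polynomial.eval_neg, Polynomial.eval_X]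
      ring

lemma two_toReal : (2 : ENNReal).toReal = 2 := by simp

lemma h2_sum_le (a : H2) (s : Finset ℕ) : ∑ i ∈ s, ‖a i‖ ^ 2 ≤ ‖a‖ ^ 2 := by
  have := lp.sum_rpow_le_norm_rpow (p := 2) (by simp) a s
  simpa using this

lemma h2_norm_le (a : H2) (C : ℝ) (hC : 0 ≤ C) (h : ∀ N, ∑ i ∈ Finset.range N, ‖a i‖ ^ 2 ≤ C ^ 2) :
    ‖a‖ ≤ C := by
  refine lp.norm_le_of_forall_sum_le (p := 2) (by simp) hC fun s => ?_
  simp only [two_toReal, Real.rpow_two]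
  obtain ⟨N, hN⟩ := s.exists_nat_subset_range
  exact (Finset.sum_le_sum_of_subset_of_nonneg hN fun _ _ _ => by positivity).trans (h N)

lemma op_of_matrix (u : ℕ → ℕ → ℂ) (C : ℝ) (hC : 0 ≤ C)
    (h : ∀ (s : Finset ℕ) (x : ℕ → ℂ) (N : ℕ),
      ∑ k ∈ Finset.range N, ‖∑ n ∈ s, x n * u n k‖ ^ 2 ≤ C ^ 2 * ∑ n ∈ s, ‖x n‖ ^ 2) :
    ∃ T : H2 →L[ℂ] H2, ∀ n k, T (lp.single 2 n 1) k = u n k := by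
  have hmem : ∀ n, Memℓp (u n) 2 := by
    intro n
    refine memℓp_gen' (C := C^2) fun s => ?_
    simp only [two_toReal, Real.rpow_two]
    obtain ⟨N, hN⟩ := s.exists_nat_subset_range
    refine (Finset.sum_le_sum_of_subset_of_nonneg hN fun _ _ _ => by positivity).trans ?_
    simpa using h {n} (fun _ => 1) N
  let U : ℕ → H2 := fun n => ⟨u n, hmem n⟩
  have hU : ∀ (s : Finset ℕ) (x : ℕ → ℂ),
      ‖∑ n ∈ s, x n • U n‖ ≤ C * Real.sqrt (∑ n ∈ s, ‖x n‖ ^ 2) := by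
    intro s x
    refine h2_norm_le _ _ (by positivity) fun N => ?_
    rw [mul_pow, Real.sq_sqrt (Finset.sum_nonneg fun _ _ => by positivity)]
    convert h s x N using 4 with k hk
    rw [lp.coeFn_sum, Finset.sum_apply]
    rfl
  have hsq : ∀ a : H2, Summable fun n => ‖a n‖ ^ 2 := by
    intro a
    exact summable_of_sum_le (fun _ => by positivity) (h2_sum_le a)
  have hsum : ∀ a : H2, Summable fun n => a n • U n := by
    intro a
    rw [summable_iff_vanishing_norm]
    intro ε hε
    have hd : 0 < (ε / (C + 1)) ^ 2 := by positivity
    obtain ⟨s, hs⟩ := summable_iff_vanishing_norm.1 (hsq a) _ hd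
    refine ⟨s, fun t ht => ?_⟩
    have h1 := hs t ht
    rw [Real.norm_of_nonneg (Finset.sum_nonneg fun _ _ => by positivity)] at h1
    have h2 : Real.sqrt (∑ n ∈ t, ‖a n‖ ^ 2) < ε / (C+1) := (Real.sqrt_lt' (by positivity)).2 h1
    calc _ ≤ C * Real.sqrt (∑ n ∈ t, ‖a n‖ ^ 2) := hU t a
      _ ≤ C * (ε / (C+1)) := by gcongr
      _ < (C+1) * (ε / (C+1)) := by
        have : 0 < ε / (C+1) := by positivity
        nlinarith
      _ = ε := by field_simp
  let T0 : H2 →ₗ[ℂ] H2 :=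
    { toFun := fun a => ∑' n, a n • U n
      map_add' := by
        intro a b
        rw [← (hsum a).tsum_add (hsum b)]
        congr 1
        funext n
        rw [← add_smul]; rfl
      map_smul' := by
        intro c a
        rw [RingHom.id_apply, ← (hsum a).tsum_const_smul c]
        congr 1
        funext n
        rw [smul_smul]; rfl }
  refine ⟨T0.mkContinuous C fun a => ?_, fun n k => ?_⟩
  · refine le_of_tendsto ((hsum a).hasSum.norm) (Eventually.of_forall fun s => ?_)
    refine (hU s a).trans ?_
    gcongr
    exact Real.sqrt_le_iff.2 ⟨norm_nonneg _, h2_sum_le a s⟩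
  · have : T0 (lp.single 2 n 1) = U n := by
      change ∑' j, (lp.single 2 n (1:ℂ) : H2) j • U j = U n
      rw [tsum_eq_single n]
      · simp
      · intro j hj
        simp [lp.single_apply, Pi.single_eq_of_ne hj]
    rw [LinearMap.mkContinuous_apply, this]

lemma rep_summable {w : ℕ → ℝ} (hw : PolyGrowth w) (a : H2) (z : ℂ) (hz : ‖z‖ < 1) :
    Summable (fun k => a k / (betaSeq w k : ℂ) * z ^ k) := by
  refine Summable.of_norm_bounded ((beta_inv_sum hw (norm_nonneg z) hz).mul_left ‖a‖) fun k => ?_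
  rw [norm_mul, norm_pow, norm_div, Complex.norm_real, Real.norm_of_nonneg (beta_pos hw k).le,
    div_eq_mul_inv, mul_assoc]
  refine mul_le_mul_of_nonneg_right (lp.norm_apply_le_norm (by simp) a k) ?_
  have := beta_pos hw k
  positivity

lemma rep_clm {w : ℕ → ℝ} (hw : PolyGrowth w) (z : ℂ) (hz : ‖z‖ < 1) :
    ∃ E : H2 →L[ℂ] ℂ, ∀ a, E a = repFun (betaSeq w) a z := by
  let E0 : H2 →ₗ[ℂ] ℂ :=
    { toFun := fun a => repFun (betaSeq w) a z
      map_add' := by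
        intro a b
        unfold repFun
        rw [← (rep_summable hw a z hz).tsum_add (rep_summable hw b z hz)]
        congr 1
        funext n
        rw [lp.coeFn_add, Pi.add_apply]; ring
      map_smul' := by
        intro c a
        unfold repFun
        rw [RingHom.id_apply, smul_eq_mul, ← (rep_summable hw a z hz).tsum_mul_left c]
        congr 1
        funext n
        rw [lp.coeFn_smul, Pi.smul_apply, smul_eq_mul]; ring }
  have hs := beta_inv_sum hw (norm_nonneg z) hz
  refine ⟨E0.mkContinuous (∑' k, (betaSeq w k)⁻¹ * ‖z‖ ^ k) fun a => ?_, fun a => rfl⟩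
  change ‖∑' k, a k / (betaSeq w k : ℂ) * z ^ k‖ ≤ _
  rw [mul_comm, ← tsum_mul_left]
  refine tsum_of_norm_bounded (hs.mul_left ‖a‖).hasSum fun k => ?_
  rw [norm_mul, norm_pow, norm_div, Complex.norm_real, Real.norm_of_nonneg (beta_pos hw k).le,
    div_eq_mul_inv, mul_assoc]
  refine mul_le_mul_of_nonneg_right (lp.norm_apply_le_norm (by simp) a k) ?_
  have := beta_pos hw k
  positivity

lemma clm_ext (E F : H2 →L[ℂ] ℂ) (h : ∀ n, E (lp.single 2 n 1) = F (lp.single 2 n 1)) (a : H2) :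
    E a = F a := by
  have hs : HasSum (fun i => lp.single 2 i (a i)) a := lp.hasSum_single (by simp) a
  have h1 := hs.mapL E
  have h2 := hs.mapL F
  refine h1.unique (h2.congr_fun fun n => ?_)
  have : (lp.single 2 n (a n) : H2) = a n • lp.single 2 n (1:ℂ) := by
    rw [← lp.single_smul]; simp
  rw [this, map_smul, map_smul, h]

lemma rep_single {w : ℕ → ℝ} (n : ℕ) (z : ℂ) :
    repFun (betaSeq w) (lp.single 2 n 1) z = z ^ n / (betaSeq w n : ℂ) := by
  unfold repFun
  rw [tsum_eq_single n]
  · simp; ring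
  · intro j hj
    simp [lp.single_apply, Pi.single_eq_of_ne hj]

lemma rep_inj {w : ℕ → ℝ} (hw : PolyGrowth w) (a b : H2)
    (h : ∀ z ∈ unitDisk, repFun (betaSeq w) a z = repFun (betaSeq w) b z) : a = b := by
  have key : ∀ a : H2, HasFPowerSeriesOnBall (repFun (betaSeq w) a)
      (FormalMultilinearSeries.ofScalars ℂ (fun k => a k / (betaSeq w k : ℂ))) 0 1 := by
    intro a
    refine ⟨?_, one_pos, ?_⟩
    · refine ENNReal.le_of_forall_nnreal_lt fun r hr => ?_
      have hr1 : (r:ℝ) < 1 := by exact_mod_cast hr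
      refine FormalMultilinearSeries.le_radius_of_summable _ ?_
      have := (rep_summable hw a (r:ℂ) (by simpa using hr1)).norm
      refine this.congr fun k => ?_
      simp
    · intro y hy
      have hy' : ‖y‖ < 1 := by
        have : ‖y‖₊ < 1 := by simpa [Metric.mem_eball, edist_zero_right, enorm_eq_nnnorm] using hy
        exact_mod_cast this
      have := (rep_summable hw a y hy').hasSum
      simpa [FormalMultilinearSeries.ofScalars_apply_eq, smul_eq_mul, repFun, mul_comm] using this
  have h1 := (key a).hasFPowerSeriesAt
  have h2 := (key b).hasFPowerSeriesAt
  have h3 : HasFPowerSeriesAt (repFun (betaSeq w) a)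
      (FormalMultilinearSeries.ofScalars ℂ (fun k => b k / (betaSeq w k : ℂ))) 0 := by
    refine h2.congr ?_
    filter_upwards [Metric.ball_mem_nhds (0:ℂ) one_pos] with z hz
    exact (h z hz).symm
  have h4 := h1.eq_formalMultilinearSeries h3
  have h5 := FormalMultilinearSeries.ofScalars_series_injective ℂ ℂ h4
  ext k
  have h6 := congrFun h5 k
  have := (beta_pos hw k).ne'
  have h7 : (betaSeq w k : ℂ) ≠ 0 := by exact_mod_cast this
  exact (div_left_inj' h7).1 h6

/-- normal form of a disk automorphism -/
def aut (ρ : ℝ) (l m z : ℂ) : ℂ := l * ((ρ + m * z) / (1 + ρ * (m * z)))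

lemma den_ne {ρ : ℝ} (h0 : 0 ≤ ρ) (h1 : ρ < 1) {z : ℂ} (hz : ‖z‖ < 1) : (1 + ρ * z : ℂ) ≠ 0 := by
  intro h
  have h2 : (ρ * z : ℂ) = -1 := by linear_combination h
  have h3 := congrArg norm h2
  rw [norm_mul, norm_neg, norm_one, Complex.norm_real, Real.norm_of_nonneg h0] at h3
  nlinarith [norm_nonneg z]

lemma aut_lt {ρ : ℝ} (h0 : 0 ≤ ρ) (h1 : ρ < 1) {l m z : ℂ} (hl : ‖l‖ = 1) (hm : ‖m‖ = 1)
    (hz : ‖z‖ < 1) : ‖aut ρ l m z‖ < 1 := by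
  have hv : ‖m * z‖ < 1 := by rw [norm_mul, hm, one_mul]; exact hz
  unfold aut
  set v := m * z
  have hd := norm_pos_iff.2 (den_ne h0 h1 hv)
  rw [norm_mul, hl, one_mul, norm_div, div_lt_one hd]
  refine lt_of_pow_lt_pow_left₀ 2 hd.le ?_
  rw [← Complex.normSq_eq_norm_sq, ← Complex.normSq_eq_norm_sq]
  have hv2 : Complex.normSq v < 1 := by
    rw [Complex.normSq_eq_norm_sq]; nlinarith [norm_nonneg v]
  simp only [Complex.normSq_apply, Complex.add_re, Complex.add_im, Complex.mul_re, Complex.mul_im,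
    Complex.ofReal_re, Complex.ofReal_im, Complex.one_re, Complex.one_im] at hv2 ⊢
  have : 0 < (1 - ρ^2) * (1 - (v.re * v.re + v.im * v.im)) :=
    mul_pos (by nlinarith) (by linarith)
  nlinarith

lemma aut_inv {ρ : ℝ} (h0 : 0 ≤ ρ) (h1 : ρ < 1) {l m z : ℂ} (hl : ‖l‖ = 1) (hm : ‖m‖ = 1)
    (hz : ‖z‖ < 1) : aut ρ (-m⁻¹) (-l⁻¹) (aut ρ l m z) = z := by
  have hl0 : l ≠ 0 := by intro h; simp [h] at hl
  have hm0 : m ≠ 0 := by intro h; simp [h] at hm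
  have hv : ‖m * z‖ < 1 := by rw [norm_mul, hm, one_mul]; exact hz
  have hd := den_ne h0 h1 hv
  have hr : (1 - (ρ:ℂ)^2) ≠ 0 := by
    have : (1 - ρ^2) ≠ 0 := by nlinarith
    exact_mod_cast this
  unfold aut
  have e : -l⁻¹ * (l * ((ρ + m * z) / (1 + ρ * (m * z)))) = -((ρ + m * z) / (1 + ρ * (m * z))) := by
    field_simp
  rw [e]
  obtain ⟨v, hvv⟩ : ∃ v, v = m * z := ⟨_, rfl⟩
  rw [← hvv] at hd ⊢
  have e1 : (ρ:ℂ) + -((ρ + v) / (1 + ρ * v)) = -((1 - (ρ:ℂ)^2) * v) / (1 + ρ * v) := by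
    rw [eq_div_iff hd, add_mul, neg_mul, div_mul_cancel₀ _ hd]; ring
  have e2 : (1:ℂ) + ρ * -((ρ + v) / (1 + ρ * v)) = (1 - (ρ:ℂ)^2) / (1 + ρ * v) := by
    rw [eq_div_iff hd, add_mul, mul_assoc, neg_mul, div_mul_cancel₀ _ hd]; ring
  rw [e1, e2, div_div_div_cancel_right₀ hd, neg_div, mul_div_cancel_left₀ _ hr, hvv]
  field_simp

lemma comp_op {w : ℕ → ℝ} (hw : PolyGrowth w) {ρ : ℝ} (h0 : 0 ≤ ρ) (h1 : ρ < 1) {l m : ℂ}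
    (hl : ‖l‖ = 1) (hm : ‖m‖ = 1) :
    ∃ T : H2 →L[ℂ] H2, RepComp (betaSeq w) (aut ρ l m) T := by
  obtain ⟨C, hC, hb⟩ := main_real hw ρ h0 h1
  have hβ : ∀ k, (betaSeq w k : ℂ) ≠ 0 := fun k => by exact_mod_cast (beta_pos hw k).ne'
  obtain ⟨T, hT⟩ := op_of_matrix
    (fun n k => (betaSeq w k : ℂ) * m ^ k * (l ^ n / (betaSeq w n : ℂ) * ((dP n (k+1)).eval ρ : ℝ)))
    (Real.sqrt C) (Real.sqrt_nonneg _) (by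
      intro s x N
      rw [Real.sq_sqrt hC]
      set y : ℕ → ℂ := fun n => x n * (l ^ n / (betaSeq w n : ℂ)) with hy
      have hy2 : ∀ n, ‖x n‖ ^ 2 = betaSeq w n ^ 2 * (y n).re ^ 2 + betaSeq w n ^ 2 * (y n).im ^ 2 := by
        intro n
        have : x n = betaSeq w n * (y n) * (l ^ n)⁻¹ := by
          have hl0 : l ≠ 0 := by intro h; simp [h] at hl
          have := hβ n
          simp only [hy]; field_simp
        rw [this, norm_mul, norm_inv, norm_pow, hl, norm_mul, Complex.norm_real]
        simp only [one_pow, inv_one, mul_one, mul_pow, Real.norm_eq_abs, sq_abs]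
        rw [← Complex.normSq_eq_norm_sq, Complex.normSq_apply]; ring
      have hk : ∀ k, ‖∑ n ∈ s, x n * ((betaSeq w k : ℂ) * m ^ k *
          (l ^ n / (betaSeq w n : ℂ) * ((dP n (k+1)).eval ρ : ℝ)))‖ ^ 2 =
          betaSeq w k ^ 2 * (∑ n ∈ s, (y n).re * (dP n (k+1)).eval ρ) ^ 2 +
          betaSeq w k ^ 2 * (∑ n ∈ s, (y n).im * (dP n (k+1)).eval ρ) ^ 2 := by
        intro k
        have : ∑ n ∈ s, x n * ((betaSeq w k : ℂ) * m ^ k *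
          (l ^ n / (betaSeq w n : ℂ) * ((dP n (k+1)).eval ρ : ℝ))) =
          (betaSeq w k : ℂ) * m ^ k * ∑ n ∈ s, y n * ((dP n (k+1)).eval ρ : ℝ) := by
          rw [Finset.mul_sum]
          refine Finset.sum_congr rfl fun n _ => ?_
          simp only [hy]; ring
        rw [this, norm_mul, norm_mul, norm_pow, hm, Complex.norm_real, one_pow, mul_one, mul_pow,
          Real.norm_eq_abs, sq_abs, ← Complex.normSq_eq_norm_sq, Complex.normSq_apply,
          Complex.re_sum, Complex.im_sum]
        simp only [Complex.re_mul_ofReal, Complex.im_mul_ofReal]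
        ring
      simp only [hk, hy2, Finset.sum_add_distrib, mul_add]
      exact add_le_add (hb s (fun n => (y n).re) N) (hb s (fun n => (y n).im) N))
  refine ⟨T, fun a z hz => ?_⟩
  have hz1 : ‖z‖ < 1 := by simpa [unitDisk] using hz
  obtain ⟨E, hE⟩ := rep_clm hw z hz1
  obtain ⟨F, hF⟩ := rep_clm hw (aut ρ l m z) (aut_lt h0 h1 hl hm hz1)
  rw [← hE, ← hF]
  refine clm_ext (E.comp T) F (fun n => ?_) a
  rw [ContinuousLinearMap.comp_apply, hE, hF, rep_single]
  unfold repFun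
  simp only [hT]
  have hv : ‖m * z‖ < 1 := by rw [norm_mul, hm, one_mul]; exact hz1
  have hg := ((dP_genfun ρ h0 h1 (m * z) hv n).mul_left (l ^ n / (betaSeq w n : ℂ))).tsum_eq
  unfold aut
  rw [mul_pow, mul_div_right_comm, ← hg]
  congr 1
  funext k
  have := hβ k
  rw [mul_pow]
  field_simp

lemma comp_equiv {w : ℕ → ℝ} (hw : PolyGrowth w) {ρ : ℝ} (h0 : 0 ≤ ρ) (h1 : ρ < 1) {l m : ℂ}
    (hl : ‖l‖ = 1) (hm : ‖m‖ = 1) :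
    ∃ X : H2 ≃L[ℂ] H2, RepComp (betaSeq w) (aut ρ l m) (X : H2 →L[ℂ] H2) := by
  have hl' : ‖-l⁻¹‖ = 1 := by simp [hl]
  have hm' : ‖-m⁻¹‖ = 1 := by simp [hm]
  obtain ⟨T, hT⟩ := comp_op hw h0 h1 hl hm
  obtain ⟨S, hS⟩ := comp_op hw h0 h1 hm' hl'
  have mem : ∀ z, z ∈ unitDisk ↔ ‖z‖ < 1 := fun z => by simp [unitDisk]
  refine ⟨ContinuousLinearEquiv.equivOfInverse T S (fun a => ?_) (fun a => ?_), fun a z hz => ?_⟩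
  · refine rep_inj hw _ _ fun z hz => ?_
    have hz1 := (mem z).1 hz
    rw [hS _ z hz, hT _ _ ((mem _).2 (aut_lt h0 h1 hm' hl' hz1))]
    have := aut_inv h0 h1 hm' hl' hz1
    simp only [inv_neg, inv_inv, neg_neg] at this
    rw [this]
  · refine rep_inj hw _ _ fun z hz => ?_
    have hz1 := (mem z).1 hz
    rw [hT _ z hz, hS _ _ ((mem _).2 (aut_lt h0 h1 hl hm hz1)), aut_inv h0 h1 hl hm hz1]
  · exact hT a z hz

lemma mul_z {w : ℕ → ℝ} (hw : PolyGrowth w) :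
    ∃ T : H2 →L[ℂ] H2, RepMul (betaSeq w) (fun z => z) T := by
  obtain ⟨W, hW0, hW⟩ := w_upper hw
  have hβ : ∀ k, (betaSeq w k : ℂ) ≠ 0 := fun k => by exact_mod_cast (beta_pos hw k).ne'
  obtain ⟨T, hT⟩ := op_of_matrix (fun n k => if k = n + 1 then (w (n+1) : ℂ) else 0) W hW0 (by
    intro s x N
    rcases N with _ | N
    · simp; positivity
    rw [Finset.sum_range_succ']
    have hz : ‖∑ n ∈ s, x n * (if 0 = n + 1 then (w (n+1) : ℂ) else 0)‖ ^ 2 = 0 := by simp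
    have hk : ∀ k, ‖∑ n ∈ s, x n * (if k + 1 = n + 1 then (w (n+1) : ℂ) else 0)‖ ^ 2 =
        if k ∈ s then ‖x k‖ ^ 2 * w (k+1) ^ 2 else 0 := by
      intro k
      by_cases hk : k ∈ s <;> simp [hk, mul_pow]
    rw [hz, add_zero]
    simp only [hk]
    rw [← Finset.sum_filter, Finset.mul_sum]
    refine (Finset.sum_le_sum (g := fun n => W ^ 2 * ‖x n‖ ^ 2) fun k _ => ?_).trans
      (Finset.sum_le_sum_of_subset_of_nonneg (fun k hk => (Finset.mem_filter.1 hk).2)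
        fun _ _ _ => by positivity)
    rw [mul_comm]
    have := (hw.1 (k+1) (by omega)).le
    have := hW k
    gcongr)
  refine ⟨T, fun a z hz => ?_⟩
  have hz1 : ‖z‖ < 1 := by simpa [unitDisk] using hz
  obtain ⟨E, hE⟩ := rep_clm hw z hz1
  rw [← hE, ← hE]
  refine clm_ext (E.comp T) (z • E) (fun n => ?_) a
  rw [ContinuousLinearMap.comp_apply, _root_.smul_apply, hE, hE, rep_single]
  unfold repFun
  simp only [hT]
  rw [tsum_eq_single (n+1)]
  · have h1 := hβ n
    have h2 : (w (n+1) : ℂ) ≠ 0 := by exact_mod_cast (hw.1 (n+1) (by omega)).ne'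
    rw [beta_succ]
    push_cast
    simp only [if_true, smul_eq_mul]
    field_simp
    try ring
  · intro j hj
    simp [hj]

lemma aut_form {φ : ℂ → ℂ} (hφ : IsDiskAut φ) : ∃ (ρ : ℝ) (l m : ℂ), 0 ≤ ρ ∧ ρ < 1 ∧ ‖l‖ = 1 ∧
    ‖m‖ = 1 ∧ ∀ z, φ z = aut ρ l m z := by
  obtain ⟨θ, z₀, hz₀, h⟩ := hφ
  have hz1 : ‖z₀‖ < 1 := by simpa [unitDisk] using hz₀
  set η : ℂ := Complex.exp (z₀.arg * Complex.I) with hη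
  have hηn : ‖η‖ = 1 := Complex.norm_exp_ofReal_mul_I _
  have hze : z₀ = ‖z₀‖ * η := (Complex.norm_mul_exp_arg_mul_I z₀).symm
  have hη1 : η * (starRingEnd ℂ) η = 1 := by
    rw [Complex.mul_conj, Complex.normSq_eq_norm_sq, hηn]; simp
  refine ⟨‖z₀‖, Complex.exp (θ * Complex.I) * η, -(starRingEnd ℂ) η, norm_nonneg _, hz1, ?_, ?_,
    fun z => ?_⟩
  · rw [norm_mul, hηn, Complex.norm_exp_ofReal_mul_I, one_mul]
  · rw [norm_neg, RCLike.norm_conj, hηn]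
  · rw [h]
    unfold mobius aut
    have hc := congrArg (starRingEnd ℂ) hze
    rw [map_mul, Complex.conj_ofReal] at hc
    have e1 : z₀ - z = η * ((‖z₀‖:ℂ) + -(starRingEnd ℂ) η * z) := by
      linear_combination hze + z * hη1
    have e2 : 1 - (starRingEnd ℂ) z₀ * z = 1 + (‖z₀‖:ℂ) * (-(starRingEnd ℂ) η * z) := by
      linear_combination -z * hc
    rw [e1, e2, mul_div_assoc, mul_assoc]

/-- On a weighted Hardy space `H²_β` of polynomial growth, for any
`φ ∈ Aut(𝔻)` the composition operator `C_φ` is a bounded invertible operator on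
`H²_β`; consequently `M_z` is similar to `M_φ` on `H²_β`. -/
theorem statement0 (w : ℕ → ℝ) (hw : PolyGrowth w) (φ : ℂ → ℂ) (hφ : IsDiskAut φ) :
    (∃ X : H2 ≃L[ℂ] H2, RepComp (betaSeq w) φ (X : H2 →L[ℂ] H2)) ∧
    ∃ Tz Tφ : H2 →L[ℂ] H2,
      RepMul (betaSeq w) (fun z => z) Tz ∧ RepMul (betaSeq w) φ Tφ ∧
        ∃ Y : H2 ≃L[ℂ] H2, ∀ a : H2, Y (Tz a) = Tφ (Y a) := by
  obtain ⟨ρ, l, m, h0, h1, hl, hm, hf⟩ := aut_form hφ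
  obtain rfl : φ = aut ρ l m := funext hf
  obtain ⟨X, hX⟩ := comp_equiv hw h0 h1 hl hm
  obtain ⟨Tz, hTz⟩ := mul_z hw
  refine ⟨⟨X, hX⟩, Tz, (X : H2 →L[ℂ] H2).comp (Tz.comp (X.symm : H2 →L[ℂ] H2)), hTz, ?_, X, ?_⟩
  · intro a z hz
    have hz1 : ‖z‖ < 1 := by simpa [unitDisk] using hz
    have hd : aut ρ l m z ∈ unitDisk := by simpa [unitDisk] using aut_lt h0 h1 hl hm hz1
    rw [ContinuousLinearMap.comp_apply, hX _ z hz, ContinuousLinearMap.comp_apply, hTz _ _ hd,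
      ← hX _ z hz]
    simp
  · intro a
    simp
end
end

section
/- Let H²_β be a weighted Hardy space of polynomial growth. Then for every finite Blaschke product B with B(0) = 0, the composition operator C_B is bounded on H²_β. -/
noncomputable section

open Complex Filter Topology

open PowerSeries in
/-- weighted partial energy -/
def En (γ : ℕ → ℝ) (N : ℕ) (h : PowerSeries ℂ) : ℝ :=
  ∑ i ∈ Finset.range N, γ i * ‖PowerSeries.coeff i h‖ ^ 2

/-- bounded multiplier -/
def Mult (γ : ℕ → ℝ) (b : PowerSeries ℂ) : Prop :=
  ∃ K : ℝ, 0 ≤ K ∧ ∀ N h, En γ N (b * h) ≤ K * En γ N h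

def invS (a : ℂ) : PowerSeries ℂ := PowerSeries.mk fun n => a ^ n

theorem invS_mul (a : ℂ) : (1 - PowerSeries.C a * PowerSeries.X) * invS a = 1 := by
  ext n
  rw [sub_mul, one_mul, mul_assoc]
  cases n with
  | zero => simp [invS]
  | succ n => simp [invS, PowerSeries.coeff_succ_X_mul, PowerSeries.coeff_one, pow_succ']

def mobS (a : ℂ) : PowerSeries ℂ :=
  (PowerSeries.C a - PowerSeries.X) * invS ((starRingEnd ℂ) a)

theorem En_nonneg {γ : ℕ → ℝ} (hγ : ∀ n, 0 ≤ γ n) (N h) : 0 ≤ En γ N h :=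
  Finset.sum_nonneg fun i _ => mul_nonneg (hγ i) (by positivity)

theorem Mult.mul {γ : ℕ → ℝ} {b c : PowerSeries ℂ} (hb : Mult γ b) (hc : Mult γ c) :
    Mult γ (b * c) := by
  obtain ⟨K, hK, h1⟩ := hb
  obtain ⟨L, hL, h2⟩ := hc
  refine ⟨K * L, by positivity, fun N h => ?_⟩
  rw [mul_assoc, mul_assoc]
  exact (h1 N _).trans (mul_le_mul_of_nonneg_left (h2 N h) hK)

theorem Mult.add {γ : ℕ → ℝ} (hγ : ∀ n, 0 ≤ γ n) {b c : PowerSeries ℂ}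
    (hb : Mult γ b) (hc : Mult γ c) : Mult γ (b + c) := by
  obtain ⟨K, hK, h1⟩ := hb
  obtain ⟨L, hL, h2⟩ := hc
  refine ⟨2 * K + 2 * L, by positivity, fun N h => ?_⟩
  have : En γ N ((b + c) * h) ≤ 2 * En γ N (b * h) + 2 * En γ N (c * h) := by
    unfold En
    rw [Finset.mul_sum, Finset.mul_sum, ← Finset.sum_add_distrib]
    refine Finset.sum_le_sum fun i _ => ?_
    rw [add_mul, map_add]
    have h3 := norm_add_le (PowerSeries.coeff i (b * h)) (PowerSeries.coeff i (c * h))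
    have h4 : ‖PowerSeries.coeff i (b * h) + PowerSeries.coeff i (c * h)‖ ^ 2 ≤
        2 * ‖PowerSeries.coeff i (b * h)‖ ^ 2 + 2 * ‖PowerSeries.coeff i (c * h)‖ ^ 2 := by
      have := pow_le_pow_left₀ (norm_nonneg _) h3 2
      nlinarith [sq_nonneg (‖PowerSeries.coeff i (b * h)‖ - ‖PowerSeries.coeff i (c * h)‖)]
    nlinarith [mul_le_mul_of_nonneg_left h4 (hγ i)]
  linarith [h1 N h, h2 N h]

theorem Mult.C {γ : ℕ → ℝ} (a : ℂ) : Mult γ (PowerSeries.C a) := by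
  refine ⟨‖a‖ ^ 2, by positivity, fun N h => le_of_eq ?_⟩
  simp [En, Finset.mul_sum, mul_pow]
  refine Finset.sum_congr rfl fun i _ => by ring

def Nice (γ : ℕ → ℝ) : Prop :=
  (∀ n, 0 < γ n) ∧ Tendsto (fun n => γ (n + 1) / γ n) atTop (𝓝 1)

theorem equiv_weight {γ : ℕ → ℝ} (hγ : ∀ n, 0 < γ n) (n0 : ℕ) :
    ∃ K : ℝ, 0 ≤ K ∧ ∀ n, γ n ≤ K * γ (max n n0) ∧ γ (max n n0) ≤ K * γ n := by
  have hnn : ∀ i, 0 ≤ γ i / γ n0 + γ n0 / γ i := fun i => by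
    have := hγ i; have := hγ n0; positivity
  refine ⟨1 + ∑ i ∈ Finset.range n0, (γ i / γ n0 + γ n0 / γ i), ?_, fun n => ?_⟩
  · have := Finset.sum_nonneg fun i (_ : i ∈ Finset.range n0) => hnn i
    linarith
  · have hs := Finset.sum_nonneg fun i (_ : i ∈ Finset.range n0) => hnn i
    rcases le_or_gt n0 n with h | h
    · rw [max_eq_left h]
      constructor <;> nlinarith [hγ n]
    · rw [max_eq_right h.le]
      have h1 := Finset.single_le_sum (fun i (_ : i ∈ Finset.range n0) => hnn i)
        (Finset.mem_range.2 h)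
      have a1 := hγ n
      have a2 := hγ n0
      have b1 : 0 < γ n / γ n0 := by positivity
      have b2 : 0 < γ n0 / γ n := by positivity
      constructor
      · rw [← div_le_iff₀ a2]; linarith
      · rw [← div_le_iff₀ a1]; linarith

theorem rec_bound {v x δ : ℕ → ℝ} {c ρ σ : ℝ} (hσ : σ < 1) (hσ0 : 0 ≤ σ)
    (hv : ∀ n, 0 ≤ v n) (hδ : ∀ n, 0 ≤ δ n)
    (h0 : v 0 ≤ c * x 0) (hs : ∀ n, v (n + 1) ≤ c * x (n + 1) + ρ * v n)
    (hd : ∀ n, δ (n + 1) * ρ ≤ σ * δ n) (N : ℕ) :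
    ∑ i ∈ Finset.range (N+1), δ i * v i ≤
      c / (1 - σ) * ∑ i ∈ Finset.range (N+1), δ i * x i := by
  have key : ∑ i ∈ Finset.range (N+1), δ i * v i ≤
      c * ∑ i ∈ Finset.range (N+1), δ i * x i + σ * ∑ i ∈ Finset.range N, δ i * v i := by
    rw [Finset.sum_range_succ', Finset.sum_range_succ' (fun i => δ i * x i), mul_add,
      Finset.mul_sum, Finset.mul_sum]
    have : ∑ k ∈ Finset.range N, δ (k + 1) * v (k + 1) ≤
        ∑ i ∈ Finset.range N, c * (δ (i + 1) * x (i + 1)) +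
          ∑ i ∈ Finset.range N, σ * (δ i * v i) := by
      rw [← Finset.sum_add_distrib]
      refine Finset.sum_le_sum fun i _ => ?_
      nlinarith [mul_le_mul_of_nonneg_left (hs i) (hδ (i+1)),
        mul_le_mul_of_nonneg_right (hd i) (hv i)]
    nlinarith [mul_le_mul_of_nonneg_left h0 (hδ 0)]
  have h2 : ∑ i ∈ Finset.range N, δ i * v i ≤ ∑ i ∈ Finset.range (N+1), δ i * v i := by
    rw [Finset.sum_range_succ]
    have := mul_nonneg (hδ N) (hv N)
    linarith
  rw [div_mul_eq_mul_div, le_div_iff₀ (by linarith)]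
  nlinarith

theorem Mult.invS {γ : ℕ → ℝ} (hγ : Nice γ) {a : ℂ} (ha : ‖a‖ < 1) : Mult γ (invS a) := by
  obtain ⟨hp, ht⟩ := hγ
  set ρ := ‖a‖ with hρ
  have hρ0 : 0 ≤ ρ := norm_nonneg _
  obtain ⟨n0, hn0⟩ : ∃ n0, ∀ n ≥ n0, γ (n + 1) * ρ ≤ (1 + ρ) / 2 * γ n := by
    have h1 : Tendsto (fun n => γ (n + 1) / γ n * ρ) atTop (𝓝 (1 * ρ)) := ht.mul_const ρ
    have h2 := h1.eventually_le_const (u := (1 + ρ) / 2) (by linarith)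
    obtain ⟨n0, h⟩ := eventually_atTop.1 h2
    refine ⟨n0, fun n hn => ?_⟩
    have := h n hn
    rwa [div_mul_eq_mul_div, div_le_iff₀ (hp n)] at this
  obtain ⟨K, hK, hKe⟩ := equiv_weight hp n0
  have hd : ∀ n, γ (max (n+1) n0) * ρ ≤ (1 + ρ) / 2 * γ (max n n0) := fun n => by
    rcases le_or_gt n0 n with h | h
    · rw [max_eq_left h, max_eq_left (by omega)]
      exact hn0 n h
    · rw [max_eq_right h.le, max_eq_right (by omega)]
      nlinarith [hp n0]
  have hc0 : 0 ≤ 1 / (1 - ρ) / (1 - (1 + ρ) / 2) :=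
    div_nonneg (div_nonneg zero_le_one (by linarith)) (by linarith)
  refine ⟨K * (1 / (1 - ρ) / (1 - (1 + ρ) / 2)) * K, by positivity, fun N h => ?_⟩
  set u := _root_.invS a * h with hu
  have hh : h = u - PowerSeries.C a * (PowerSeries.X * u) := by
    have := invS_mul a
    linear_combination (-h) * this
  have h0 : PowerSeries.coeff 0 h = PowerSeries.coeff 0 u := by
    rw [hh]; simp
  have hs : ∀ n, PowerSeries.coeff (n+1) u = PowerSeries.coeff (n+1) h
      + a * PowerSeries.coeff n u := fun n => by
    conv_rhs => rw [hh]
    rw [map_sub, PowerSeries.coeff_C_mul, PowerSeries.coeff_succ_X_mul]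
    ring
  cases N with
  | zero => simp [En]
  | succ N =>
  have hrec := rec_bound (v := fun n => ‖PowerSeries.coeff n u‖ ^ 2)
    (x := fun n => ‖PowerSeries.coeff n h‖ ^ 2) (δ := fun n => γ (max n n0))
    (c := 1 / (1 - ρ)) (ρ := ρ) (σ := (1 + ρ) / 2) (by linarith) (by linarith)
    (fun n => by positivity) (fun n => (hp _).le)
    (by
      rw [h0, div_mul_eq_mul_div, le_div_iff₀ (by linarith)]
      nlinarith [sq_nonneg ‖PowerSeries.coeff 0 u‖])
    (fun n => by
      have h3 : ‖PowerSeries.coeff (n+1) u‖ ≤ ‖PowerSeries.coeff (n+1) h‖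
        + ρ * ‖PowerSeries.coeff n u‖ := by
        rw [hs n]
        exact (norm_add_le _ _).trans (by rw [norm_mul])
      set p := ‖PowerSeries.coeff (n+1) h‖
      set q := ‖PowerSeries.coeff n u‖
      have h4 := pow_le_pow_left₀ (norm_nonneg _) h3 2
      refine h4.trans ?_
      rw [div_mul_eq_mul_div, ← sub_le_iff_le_add, le_div_iff₀ (by linarith)]
      nlinarith [mul_nonneg hρ0 (sq_nonneg (p - (1 - ρ) * q))])
    hd N
  calc En γ (N+1) u ≤ K * ∑ i ∈ Finset.range (N+1),
        γ (max i n0) * ‖PowerSeries.coeff i u‖ ^ 2 := by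
        unfold En
        rw [Finset.mul_sum]
        refine Finset.sum_le_sum fun i _ => ?_
        rw [← mul_assoc]
        exact mul_le_mul_of_nonneg_right (hKe i).1 (by positivity)
    _ ≤ K * (1 / (1 - ρ) / (1 - (1 + ρ) / 2) * ∑ i ∈ Finset.range (N+1),
        γ (max i n0) * ‖PowerSeries.coeff i h‖ ^ 2) := mul_le_mul_of_nonneg_left hrec hK
    _ ≤ K * (1 / (1 - ρ) / (1 - (1 + ρ) / 2) * (K * En γ (N+1) h)) := by
        refine mul_le_mul_of_nonneg_left (mul_le_mul_of_nonneg_left ?_ hc0) hK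
        unfold En
        rw [Finset.mul_sum]
        refine Finset.sum_le_sum fun i _ => ?_
        rw [← mul_assoc]
        exact mul_le_mul_of_nonneg_right (hKe i).2 (by positivity)
    _ = _ := by ring

theorem Mult.X {γ : ℕ → ℝ} (hγ : Nice γ) : Mult γ PowerSeries.X := by
  obtain ⟨hp, ht⟩ := hγ
  obtain ⟨D, hD⟩ := ht.bddAbove_range
  have hD' : ∀ n, γ (n+1) ≤ D * γ n := fun n => by
    rw [← div_le_iff₀ (hp n)]
    exact hD ⟨n, rfl⟩
  have hD0 : 0 ≤ D := (div_nonneg (hp 1).le (hp 0).le).trans (hD ⟨0, rfl⟩)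
  refine ⟨D, hD0, fun N h => ?_⟩
  cases N with
  | zero => simp [En]
  | succ N =>
    unfold En
    rw [Finset.sum_range_succ', Finset.sum_range_succ, mul_add, Finset.mul_sum]
    have : 0 ≤ D * (γ N * ‖PowerSeries.coeff N h‖ ^ 2) := by
      have := (hp N).le
      positivity
    simp only [PowerSeries.coeff_succ_X_mul, PowerSeries.coeff_zero_X_mul]
    have h2 : ∑ k ∈ Finset.range N, γ (k+1) * ‖PowerSeries.coeff k h‖ ^ 2 ≤
      ∑ i ∈ Finset.range N, D * (γ i * ‖PowerSeries.coeff i h‖ ^ 2) := by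
      refine Finset.sum_le_sum fun i _ => ?_
      rw [← mul_assoc]
      exact mul_le_mul_of_nonneg_right (hD' i) (by positivity)
    simpa using h2.trans (by linarith)

/-- b and its derivative are multipliers -/
def Mult2 (γ : ℕ → ℝ) (b : PowerSeries ℂ) : Prop :=
  Mult γ b ∧ Mult γ (PowerSeries.derivative ℂ b)

theorem Mult2.mul {γ : ℕ → ℝ} (hγ : ∀ n, 0 ≤ γ n) {b c : PowerSeries ℂ}
    (hb : Mult2 γ b) (hc : Mult2 γ c) : Mult2 γ (b * c) := by
  refine ⟨hb.1.mul hc.1, ?_⟩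
  rw [Derivation.leibniz]
  exact (hb.1.mul hc.2).add hγ (hc.1.mul hb.2)

theorem Mult2.C {γ : ℕ → ℝ} (a : ℂ) : Mult2 γ (PowerSeries.C a) := by
  refine ⟨Mult.C a, ?_⟩
  rw [PowerSeries.derivative_C, ← map_zero PowerSeries.C]
  exact Mult.C 0

theorem Mult2.mobS {γ : ℕ → ℝ} (hγ : Nice γ) {a : ℂ} (ha : ‖a‖ < 1) : Mult2 γ (mobS a) := by
  have h0 : ∀ n, 0 ≤ γ n := fun n => (hγ.1 n).le
  have hc : ‖(starRingEnd ℂ) a‖ < 1 := by simpa using ha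
  have hi := Mult.invS hγ hc
  refine Mult2.mul h0 ⟨?_, ?_⟩ ⟨hi, ?_⟩
  · have : (PowerSeries.C a - PowerSeries.X : PowerSeries ℂ) =
        PowerSeries.C a + PowerSeries.C (-1) * PowerSeries.X := by
      rw [map_neg, map_one]; ring
    rw [this]
    exact (Mult.C a).add h0 ((Mult.C _).mul (Mult.X hγ))
  · rw [map_sub, PowerSeries.derivative_C, PowerSeries.derivative_X]
    have : (0 - 1 : PowerSeries ℂ) = PowerSeries.C (-1) := by
      rw [map_neg, map_one]; ring
    rw [this]
    exact Mult.C _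
  · set b := (starRingEnd ℂ) a
    have h1 := invS_mul b
    have h2 := congrArg (PowerSeries.derivative ℂ) h1
    rw [Derivation.leibniz, map_sub, Derivation.leibniz, PowerSeries.derivative_C,
      PowerSeries.derivative_X, PowerSeries.derivative_one] at h2
    simp only [smul_eq_mul] at h2
    have h3 : PowerSeries.derivative ℂ (_root_.invS b) =
        PowerSeries.C b * (_root_.invS b * _root_.invS b) := by
      linear_combination (_root_.invS b) * h2 - (PowerSeries.derivative ℂ (_root_.invS b)) * h1
    rw [h3]
    exact (Mult.C _).mul (hi.mul hi)

def blaS {m : ℕ} (c : ℂ) (zs : Fin m → ℂ) : PowerSeries ℂ :=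
  PowerSeries.C c * ∏ j, mobS (zs j)

theorem Mult2.blaS {γ : ℕ → ℝ} (hγ : Nice γ) {m : ℕ} (c : ℂ) (zs : Fin m → ℂ)
    (hz : ∀ j, ‖zs j‖ < 1) : Mult2 γ (blaS c zs) := by
  have h0 : ∀ n, 0 ≤ γ n := fun n => (hγ.1 n).le
  refine Mult2.mul h0 (Mult2.C c) ?_
  refine Finset.prod_induction _ (Mult2 γ) (fun a b => Mult2.mul h0) ?_
    (fun j _ => Mult2.mobS hγ (hz j))
  rw [← map_one PowerSeries.C]
  exact Mult2.C 1

def Contr (b : PowerSeries ℂ) : Prop := ∀ N h, En 1 N (b * h) ≤ En 1 N h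

theorem Contr.mul {b c : PowerSeries ℂ} (hb : Contr b) (hc : Contr c) : Contr (b * c) :=
  fun N h => by rw [mul_assoc]; exact (hb N _).trans (hc N h)

theorem norm_id (a x y : ℂ) : ‖x - (starRingEnd ℂ) a * y‖ ^ 2 - ‖a * x - y‖ ^ 2 =
    (1 - ‖a‖ ^ 2) * (‖x‖ ^ 2 - ‖y‖ ^ 2) := by
  simp only [← Complex.normSq_eq_norm_sq, Complex.normSq_apply]
  simp
  ring

theorem Contr.mobS {a : ℂ} (ha : ‖a‖ < 1) : Contr (mobS a) := by
  intro N g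
  set u := invS ((starRingEnd ℂ) a) * g with hu
  have h1 : _root_.mobS a * g = PowerSeries.C a * u - PowerSeries.X * u := by
    rw [_root_.mobS, hu]; ring
  have h2 : g = u - PowerSeries.C ((starRingEnd ℂ) a) * (PowerSeries.X * u) := by
    have := invS_mul ((starRingEnd ℂ) a)
    linear_combination (-g) * this
  have ha2 : 0 ≤ 1 - ‖a‖ ^ 2 := by nlinarith [norm_nonneg a]
  have key : ∀ N, En 1 (N+1) g - En 1 (N+1) (PowerSeries.C a * u - PowerSeries.X * u) =
      (1 - ‖a‖ ^ 2) * ‖PowerSeries.coeff N u‖ ^ 2 := by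
    intro N
    rw [h2]
    induction N with
    | zero =>
      simp [En, mul_pow]; ring
    | succ N ih =>
      unfold En at ih ⊢
      rw [Finset.sum_range_succ, Finset.sum_range_succ _ (N+1)]
      have := norm_id a (PowerSeries.coeff (N+1) u) (PowerSeries.coeff N u)
      simp only [map_sub, PowerSeries.coeff_C_mul, PowerSeries.coeff_succ_X_mul, Pi.one_apply,
        one_mul] at ih ⊢
      linarith
  rw [h1]
  cases N with
  | zero => simp [En]
  | succ N =>
    have := key N
    have h3 : 0 ≤ (1 - ‖a‖ ^ 2) * ‖PowerSeries.coeff N u‖ ^ 2 := by positivity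
    linarith

theorem Contr.C {c : ℂ} (hc : ‖c‖ = 1) : Contr (PowerSeries.C c) := by
  intro N h
  simp [En, hc]

theorem Contr.blaS {m : ℕ} {c : ℂ} (hc : ‖c‖ = 1) (zs : Fin m → ℂ)
    (hz : ∀ j, ‖zs j‖ < 1) : Contr (blaS c zs) := by
  refine Contr.mul (Contr.C hc) ?_
  refine Finset.prod_induction _ Contr (fun a b => Contr.mul) ?_
    (fun j _ => Contr.mobS (hz j))
  rw [← map_one PowerSeries.C]
  exact Contr.C (by simp)
def shiftS (f : PowerSeries ℂ) : PowerSeries ℂ := PowerSeries.mk fun n => PowerSeries.coeff (n+1) f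

theorem shiftS_eq (f : PowerSeries ℂ) :
    f = PowerSeries.C (PowerSeries.coeff 0 f) + PowerSeries.X * shiftS f := by
  ext n
  cases n with
  | zero => simp
  | succ n => simp [PowerSeries.coeff_succ_X_mul, shiftS]

theorem En_congr {γ : ℕ → ℝ} {N : ℕ} {f g : PowerSeries ℂ}
    (h : ∀ i < N, PowerSeries.coeff i f = PowerSeries.coeff i g) : En γ N f = En γ N g :=
  Finset.sum_congr rfl fun i hi => by rw [h i (Finset.mem_range.1 hi)]

theorem coeff_mul_congr {b k k' : PowerSeries ℂ} {N : ℕ} (hb : PowerSeries.coeff 0 b = 0)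
    (h : ∀ i < N, PowerSeries.coeff i k = PowerSeries.coeff i k') :
    ∀ i < N + 1, PowerSeries.coeff i (b * k) = PowerSeries.coeff i (b * k') := by
  intro i hi
  rw [PowerSeries.coeff_mul, PowerSeries.coeff_mul]
  refine Finset.sum_congr rfl fun p hp => ?_
  have := Finset.HasAntidiagonal.mem_antidiagonal.1 hp
  rcases Nat.eq_zero_or_pos p.1 with h0 | h0
  · rw [h0, hb]; simp
  · rw [h p.2 (by omega)]

theorem Contr.mul_succ {b : PowerSeries ℂ} (hc : Contr b) (hb : PowerSeries.coeff 0 b = 0)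
    (N : ℕ) (k : PowerSeries ℂ) : En 1 (N+1) (b * k) ≤ En 1 N k := by
  set k' : PowerSeries ℂ := PowerSeries.mk fun i => if i < N then PowerSeries.coeff i k else 0
  have hk : ∀ i < N, PowerSeries.coeff i k = PowerSeries.coeff i k' := fun i hi => by
    simp [k', hi]
  rw [En_congr (coeff_mul_congr hb hk)]
  refine (hc _ _).trans (le_of_eq ?_)
  rw [En_congr hk]
  unfold En
  rw [Finset.sum_range_succ]
  simp [k']

theorem subst_step {b : PowerSeries ℂ} (hb : PowerSeries.HasSubst b) (f : PowerSeries ℂ) :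
    f.subst b = PowerSeries.C (PowerSeries.coeff 0 f) + b * (shiftS f).subst b := by
  conv_lhs => rw [shiftS_eq f]
  rw [PowerSeries.subst_add hb, PowerSeries.subst_mul hb, PowerSeries.subst_X hb,
    PowerSeries.subst_C]
  rfl

theorem comp_contr {b : PowerSeries ℂ} (hc : Contr b) (hb : PowerSeries.coeff 0 b = 0)
    (hs : PowerSeries.HasSubst b) (N : ℕ) :
    ∀ f : PowerSeries ℂ, En 1 N (f.subst b) ≤ En 1 N f := by
  induction N with
  | zero => intro f; simp [En]
  | succ N ih =>
    intro f
    have h1 : En 1 (N+1) f = ‖PowerSeries.coeff 0 f‖ ^ 2 + En 1 N (shiftS f) := by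
      unfold En
      rw [Finset.sum_range_succ']
      simp [shiftS, add_comm]
    have h2 : En 1 (N+1) (f.subst b) = ‖PowerSeries.coeff 0 f‖ ^ 2 +
        En 1 (N+1) (b * (shiftS f).subst b) := by
      rw [subst_step hs f]
      unfold En
      rw [Finset.sum_range_succ', Finset.sum_range_succ']
      have hb' : PowerSeries.constantCoeff b = 0 := by simpa using hb
      simp [hb', add_comm]
    rw [h1, h2]
    linarith [hc.mul_succ hb N ((shiftS f).subst b), ih (shiftS f)]

theorem En_antitone {γ : ℕ → ℝ} (hγ : ∀ n, 0 ≤ γ n) (ha : ∀ n, γ (n+1) ≤ γ n)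
    {f g : PowerSeries ℂ} (h : ∀ N, En 1 N g ≤ En 1 N f) (N : ℕ) : En γ N g ≤ En γ N f := by
  have key : ∀ N, γ N * (En 1 (N+1) f - En 1 (N+1) g) ≤ En γ (N+1) f - En γ (N+1) g := by
    intro N
    induction N with
    | zero => simp [En]; linarith
    | succ N ih =>
      have e1 : ∀ (δ : ℕ → ℝ) (k : PowerSeries ℂ), En δ (N+1+1) k =
        En δ (N+1) k + δ (N+1) * ‖PowerSeries.coeff (N+1) k‖ ^ 2 := fun δ k => by
        unfold En; rw [Finset.sum_range_succ]
      rw [e1, e1, e1, e1]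
      have h1 := h (N+1)
      have h2 : (γ N - γ (N+1)) * (En 1 (N+1) f - En 1 (N+1) g) ≥ 0 :=
        mul_nonneg (by linarith [ha N]) (by linarith)
      simp only [Pi.one_apply, one_mul]
      linarith
  cases N with
  | zero => simp [En]
  | succ N =>
    have := key N
    have := mul_nonneg (hγ N) (sub_nonneg.2 (h (N+1)))
    linarith

theorem Nice.deriv {γ : ℕ → ℝ} (h : Nice γ) : Nice fun n => γ (n+1) / ((n:ℝ)+1)^2 := by
  refine ⟨fun n => by have := h.1 (n+1); positivity, ?_⟩
  have h1 := (tendsto_add_atTop_iff_nat 1).2 h.2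
  have h2 : Tendsto (fun n : ℕ => ((n:ℝ)+1) / ((n:ℝ)+2)) atTop (𝓝 1) := by
    have h3 : Tendsto (fun n : ℕ => 1 - 1 / (((n+1:ℕ):ℝ)+1)) atTop (𝓝 (1 - 0)) :=
      tendsto_const_nhds.sub
        ((tendsto_add_atTop_iff_nat 1).2 (tendsto_one_div_add_atTop_nhds_zero_nat (𝕜 := ℝ)))
    rw [sub_zero] at h3
    refine h3.congr fun n => ?_
    push_cast
    field_simp
    ring
  have h4 := h1.mul (h2.pow 2)
  rw [one_pow, mul_one] at h4
  refine h4.congr fun n => ?_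
  have := (h.1 (n+1)).ne'
  push_cast
  field_simp
  ring

def CompBdd (γ : ℕ → ℝ) (b : PowerSeries ℂ) : Prop :=
  ∃ K : ℝ, 0 ≤ K ∧ ∀ N f, En γ N (PowerSeries.subst b f) ≤ K * En γ N f

theorem comp_bdd {b : PowerSeries ℂ} (hc : Contr b) (hb : PowerSeries.coeff 0 b = 0)
    (hs : PowerSeries.HasSubst b) (hm : ∀ γ, Nice γ → Mult2 γ b) (s : ℕ) :
    ∀ γ : ℕ → ℝ, Nice γ → (∀ n : ℕ, γ (n+1) ≤ (((n:ℝ)+1+s)/((n:ℝ)+1))^2 * γ n) →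
      CompBdd γ b := by
  induction s with
  | zero =>
    intro γ hγ h
    refine ⟨1, zero_le_one, fun N f => ?_⟩
    rw [one_mul]
    refine En_antitone (fun n => (hγ.1 n).le) (fun n => ?_) (fun N => comp_contr hc hb hs N f) N
    have h1 := h n
    have : (n:ℝ) + 1 ≠ 0 := by positivity
    simpa [this] using h1
  | succ s ih =>
    intro γ hγ h
    have hγ' := hγ.deriv
    obtain ⟨K, hK, hKb⟩ := ih _ hγ' (fun n => by
      have h1 := h (n+1)
      have hp := hγ.1 (n+1)
      push_cast at h1 ⊢
      rw [div_le_iff₀ (by positivity)]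
      refine h1.trans ?_
      have e : (((n:ℝ) + 1 + s) / (n + 1)) ^ 2 * (γ (n + 1) / (n + 1) ^ 2) * (n + 1 + 1) ^ 2
        = ((((n:ℝ) + 1 + s) / (n + 1)) * (1 / (n + 1)) * (n + 1 + 1)) ^ 2 * γ (n+1) := by
        field_simp
      rw [e]
      refine mul_le_mul_of_nonneg_right (pow_le_pow_left₀ (by positivity) ?_ 2) hp.le
      rw [div_le_iff₀ (by positivity)]
      have e2 : ((n:ℝ) + 1 + s) / (n + 1) * (1 / (n + 1)) * (n + 1 + 1) * (n + 1 + 1) =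
        (((n:ℝ) + 1 + s) * (n+2)^2) / (n+1)^2 := by
        field_simp; ring
      rw [e2, le_div_iff₀ (by positivity)]
      have : (0:ℝ) ≤ n := by positivity
      have : (0:ℝ) ≤ s := by positivity
      have : (0:ℝ) ≤ n * s := by positivity
      nlinarith)
    obtain ⟨L, hL, hLb⟩ := (hm _ hγ').2
    have split : ∀ N (f : PowerSeries ℂ), En γ (N+1) f = γ 0 * ‖PowerSeries.coeff 0 f‖ ^ 2 +
        En (fun n => γ (n+1) / ((n:ℝ)+1)^2) N (PowerSeries.derivative ℂ f) := fun N f => by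
      unfold En
      rw [Finset.sum_range_succ', add_comm]
      congr 1
      refine Finset.sum_congr rfl fun i _ => ?_
      rw [PowerSeries.coeff_derivative, norm_mul, mul_pow]
      have : ‖((i:ℂ) + 1)‖ = (i:ℝ) + 1 := by
        rw [← Nat.cast_one, ← Nat.cast_add, Complex.norm_natCast]; push_cast; rfl
      rw [this]
      field_simp
    refine ⟨1 + L * K, by positivity, fun N f => ?_⟩
    cases N with
    | zero => simp [En]
    | succ N =>
      rw [split, split]
      have h0 : PowerSeries.coeff 0 (PowerSeries.subst b f) = PowerSeries.coeff 0 f := by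
        rw [subst_step hs f]
        have hb' : PowerSeries.constantCoeff b = 0 := by simpa using hb
        simp [hb']
      rw [h0, PowerSeries.derivative_subst hs, mul_comm (PowerSeries.subst b _)]
      set e := PowerSeries.derivative ℂ f
      have i1 := hLb N (PowerSeries.subst b e)
      have i2 := mul_le_mul_of_nonneg_left (hKb N e) hL
      have p1 : 0 ≤ γ 0 * ‖PowerSeries.coeff 0 f‖ ^ 2 := by
        have := (hγ.1 0).le
        positivity
      have p2 := En_nonneg (fun n => (hγ'.1 n).le) N e
      have p3 : 0 ≤ L * K * (γ 0 * ‖PowerSeries.coeff 0 f‖ ^ 2) := by positivity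
      nlinarith
def EvS (p : PowerSeries ℂ) (F : ℂ → ℂ) : Prop :=
  ∀ z : ℂ, ‖z‖ < 1 → Summable (fun n => ‖PowerSeries.coeff n p * z ^ n‖) ∧
    ∑' n, PowerSeries.coeff n p * z ^ n = F z

theorem EvS.mul {p q : PowerSeries ℂ} {F G : ℂ → ℂ} (hp : EvS p F) (hq : EvS q G) :
    EvS (p * q) (fun z => F z * G z) := by
  intro z hz
  obtain ⟨h1, h2⟩ := hp z hz
  obtain ⟨h3, h4⟩ := hq z hz
  have e : ∀ n, PowerSeries.coeff n (p * q) * z ^ n =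
      ∑ kl ∈ Finset.HasAntidiagonal.antidiagonal n, (PowerSeries.coeff kl.1 p * z ^ kl.1) *
        (PowerSeries.coeff kl.2 q * z ^ kl.2) := fun n => by
    rw [PowerSeries.coeff_mul, Finset.sum_mul]
    refine Finset.sum_congr rfl fun kl hkl => ?_
    rw [← Finset.HasAntidiagonal.mem_antidiagonal.1 hkl, pow_add]
    ring
  have e' := funext e
  constructor
  · have := summable_norm_sum_mul_antidiagonal_of_summable_norm h1 h3
    exact this.congr fun n => congrArg norm (e n).symm
  · have := tsum_mul_tsum_eq_tsum_sum_antidiagonal_of_summable_norm h1 h3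
    rw [h2, h4] at this
    exact (congrArg tsum e').trans this.symm

theorem EvS.C (c : ℂ) : EvS (PowerSeries.C c) (fun _ => c) := by
  intro z hz
  have h0 : ∀ n, n ≠ 0 → PowerSeries.coeff n (PowerSeries.C c) * z ^ n = 0 := fun n hn => by
    simp [PowerSeries.coeff_C, hn]
  constructor
  · refine summable_of_ne_finset_zero (s := {0}) fun n hn => ?_
    rw [h0 n (by simpa using hn), norm_zero]
  · rw [tsum_eq_single 0 h0]; simp

theorem EvS.sub_X (a : ℂ) : EvS (PowerSeries.C a - PowerSeries.X) (fun z => a - z) := by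
  intro z hz
  have h0 : ∀ n, n ∉ ({0, 1} : Finset ℕ) →
      PowerSeries.coeff n (PowerSeries.C a - PowerSeries.X) * z ^ n = 0 := fun n hn => by
    simp only [Finset.mem_insert, Finset.mem_singleton, not_or] at hn
    simp [PowerSeries.coeff_C, PowerSeries.coeff_X, hn.1, hn.2]
  constructor
  · refine summable_of_ne_finset_zero (s := {0, 1}) fun n hn => ?_
    rw [h0 n hn, norm_zero]
  · rw [tsum_eq_sum h0, Finset.sum_pair (by norm_num)]
    simp [PowerSeries.coeff_X]
    ring

theorem EvS.invS {a : ℂ} (ha : ‖a‖ < 1) : EvS (invS a) (fun z => (1 - a * z)⁻¹) := by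
  intro z hz
  have e : ∀ n, PowerSeries.coeff n (_root_.invS a) * z ^ n = (a * z) ^ n := fun n => by
    simp [_root_.invS, mul_pow]
  have hl : ‖a * z‖ < 1 := by
    rw [norm_mul]
    nlinarith [norm_nonneg a, norm_nonneg z]
  simp only [e, norm_pow]
  exact ⟨summable_geometric_of_lt_one (norm_nonneg _) hl, tsum_geometric_of_norm_lt_one hl⟩

theorem EvS.mobS {a : ℂ} (ha : ‖a‖ < 1) : EvS (mobS a) (mobius a) := by
  have h : ‖(starRingEnd ℂ) a‖ < 1 := by simpa using ha
  exact (EvS.sub_X a).mul (EvS.invS h)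

theorem EvS.one : EvS 1 (fun _ => 1) := by
  rw [← map_one PowerSeries.C]; exact EvS.C 1

theorem EvS.pow {p : PowerSeries ℂ} {F : ℂ → ℂ} (h : EvS p F) (k : ℕ) :
    EvS (p ^ k) (fun z => F z ^ k) := by
  induction k with
  | zero => simpa using EvS.one
  | succ k ih => simpa [pow_succ] using ih.mul h

theorem EvS.prod {m : ℕ} (zs : Fin m → ℂ) (hz : ∀ j, ‖zs j‖ < 1) (s : Finset (Fin m)) :
    EvS (∏ j ∈ s, _root_.mobS (zs j)) (fun z => ∏ j ∈ s, mobius (zs j) z) := by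
  classical
  induction s using Finset.induction_on with
  | empty => simpa using EvS.one
  | insert j s hj ih =>
    simp only [Finset.prod_insert hj]
    exact (EvS.mobS (hz j)).mul ih

theorem EvS.blaS {m : ℕ} (c : ℂ) (zs : Fin m → ℂ) (hz : ∀ j, ‖zs j‖ < 1) :
    EvS (blaS c zs) (fun z => c * ∏ j, mobius (zs j) z) :=
  (EvS.C c).mul (EvS.prod zs hz Finset.univ)

theorem mobius_lt {a z : ℂ} (ha : ‖a‖ < 1) (hz : ‖z‖ < 1) : ‖mobius a z‖ < 1 := by
  have h := norm_id a 1 z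
  have hne : 1 - (starRingEnd ℂ) a * z ≠ 0 := by
    intro h0
    have h1 : (starRingEnd ℂ) a * z = 1 := by linear_combination -h0
    have := congrArg norm h1
    simp at this
    nlinarith [norm_nonneg a, norm_nonneg z]
  have hpos : 0 < ‖1 - (starRingEnd ℂ) a * z‖ := norm_pos_iff.2 hne
  rw [mobius, norm_div, div_lt_one hpos]
  refine lt_of_pow_lt_pow_left₀ 2 hpos.le ?_
  rw [mul_one] at h
  have : 0 < (1 - ‖a‖ ^ 2) * (‖(1:ℂ)‖ ^ 2 - ‖z‖ ^ 2) := by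
    rw [norm_one]
    refine mul_pos ?_ ?_ <;> nlinarith [norm_nonneg a, norm_nonneg z]
  linarith

theorem bla_lt {m : ℕ} (hm : 0 < m) {c : ℂ} (hc : ‖c‖ = 1) (zs : Fin m → ℂ)
    (hz : ∀ j, ‖zs j‖ < 1) {z : ℂ} (h : ‖z‖ < 1) : ‖c * ∏ j, mobius (zs j) z‖ < 1 := by
  rw [norm_mul, hc, one_mul, norm_prod, ← Finset.mul_prod_erase _ _ (Finset.mem_univ ⟨0, hm⟩)]
  have h1 := mobius_lt (hz ⟨0, hm⟩) h
  have h2 : ∏ j ∈ Finset.univ.erase ⟨0, hm⟩, ‖mobius (zs j) z‖ ≤ 1 :=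
    Finset.prod_le_one (fun _ _ => norm_nonneg _) (fun j _ => (mobius_lt (hz j) h).le)
  have h3 : 0 ≤ ∏ j ∈ Finset.univ.erase ⟨0, hm⟩, ‖mobius (zs j) z‖ :=
    Finset.prod_nonneg fun _ _ => norm_nonneg _
  nlinarith [norm_nonneg (mobius (zs ⟨0, hm⟩) z)]

theorem eval_clm {β : ℕ → ℝ} (hβ : ∀ n, 0 < β n) (hr : Nice fun n => β n ^ 2) {z : ℂ}
    (hz : ‖z‖ < 1) : ∃ L : H2 →L[ℂ] ℂ, ∀ a, L a = repFun β a z := by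
  by_cases hz0 : z = 0
  · refine ⟨((β 0 : ℂ)⁻¹) • lp.evalCLM ℂ (fun _ : ℕ => ℂ) 2 0, fun a => ?_⟩
    subst hz0
    unfold repFun
    rw [tsum_eq_single 0 (fun n hn => by simp [hn])]
    simp only [pow_zero, mul_one, div_eq_inv_mul]
    rfl
  have hzp : 0 < ‖z‖ := norm_pos_iff.2 hz0
  have hs : Summable fun n => ‖z‖ ^ (2 * n) / β n ^ 2 := by
    refine summable_of_ratio_test_tendsto_lt_one (l := ‖z‖ ^ 2) (by nlinarith) ?_ ?_
    · exact Eventually.of_forall fun n => by have := hβ n; positivity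
    · have h1 := (hr.2.inv₀ one_ne_zero).mul_const (‖z‖ ^ 2)
      rw [inv_one, one_mul] at h1
      refine h1.congr fun n => ?_
      have b1 := hβ n
      have b2 := hβ (n+1)
      rw [Real.norm_of_nonneg (by positivity), Real.norm_of_nonneg (by positivity)]
      field_simp
      ring
  have hmem : Memℓp (fun n => (starRingEnd ℂ) (z ^ n / (β n : ℂ))) 2 := by
    refine memℓp_gen ?_
    refine hs.congr fun n => ?_
    have := hβ n
    simp [abs_of_pos this, div_pow]
    ring
  refine ⟨innerSL ℂ (⟨_, hmem⟩ : H2), fun a => ?_⟩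
  rw [innerSL_apply_apply, lp.inner_eq_tsum]
  unfold repFun
  refine tsum_congr fun n => ?_
  simp
  ring

theorem statement3 (w : ℕ → ℝ) (hw : PolyGrowth w) (m : ℕ) (hm : 0 < m)
    (B : ℂ → ℂ) (hB : IsBlaschke m B) (hB0 : B 0 = 0) :
    ∃ T : H2 →L[ℂ] H2, RepComp (betaSeq w) B T := by
  obtain ⟨hpos, hlim, M, hM⟩ := hw
  obtain ⟨θ, zs, hzs, hBz⟩ := hB
  have hz : ∀ j, ‖zs j‖ < 1 := fun j => by simpa [unitDisk] using hzs j
  have hc : ‖Complex.exp (θ * Complex.I)‖ = 1 := Complex.norm_exp_ofReal_mul_I θ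
  set c := Complex.exp (θ * Complex.I)
  set b := blaS c zs
  have hev : EvS b B := by
    have := EvS.blaS c zs hz
    rwa [← (funext hBz : B = _)] at this
  have hb0 : PowerSeries.coeff 0 b = 0 := by
    have := (hev 0 (by simp)).2
    rw [hB0, tsum_eq_single 0 (fun n hn => by simp [hn])] at this
    simpa using this
  have hsub : PowerSeries.HasSubst b :=
    PowerSeries.HasSubst.of_constantCoeff_zero' (by simpa using hb0)
  set β := betaSeq w with hβdef
  have hβs : ∀ n, β (n+1) = β n * w (n+1) := fun n => by
    simp [hβdef, betaSeq, Finset.prod_Icc_succ_top]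
  have hβ : ∀ n, 0 < β n := fun n =>
    Finset.prod_pos fun j hj => hpos j (Finset.mem_Icc.1 hj).1
  have hnice : Nice fun n => β n ^ 2 := by
    refine ⟨fun n => by have := hβ n; positivity, ?_⟩
    have h1 := ((tendsto_add_atTop_iff_nat 1).2 hlim).pow 2
    rw [one_pow] at h1
    refine h1.congr fun n => ?_
    have := (hβ n).ne'
    change _ = β (n+1) ^ 2 / β n ^ 2
    rw [hβs]
    field_simp
  obtain ⟨s, hs⟩ := exists_nat_ge M
  obtain ⟨K, hK, hKb⟩ := comp_bdd (Contr.blaS hc zs hz) hb0 hsub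
    (fun γ hγ => Mult2.blaS hγ c zs hz) s _ hnice (fun n => by
      have h1 := hM (n+1) (by omega)
      have h2 := hpos (n+1) (by omega)
      rw [hβs, mul_pow, mul_comm]
      refine mul_le_mul_of_nonneg_right (pow_le_pow_left₀ h2.le ?_ 2) (sq_nonneg _)
      rw [le_div_iff₀ (by positivity)]
      push_cast at h1
      have h3 := le_abs_self (w (n+1) - 1)
      have h4 := abs_nonneg (w (n+1) - 1)
      have : (0:ℝ) ≤ n := by positivity
      nlinarith)
  have hbd : ∀ (a : H2) (t : Finset ℕ), ∑ i ∈ t, ‖(β i : ℂ) * PowerSeries.coeff i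
      (PowerSeries.subst b (PowerSeries.mk fun k => a k / (β k : ℂ)))‖ ^ (2 : ENNReal).toReal ≤
      (√K * ‖a‖) ^ (2 : ENNReal).toReal := by
    intro a t
    obtain ⟨N, hN⟩ := t.exists_nat_subset_range
    refine (Finset.sum_le_sum_of_subset_of_nonneg hN fun i _ _ => by positivity).trans ?_
    have h1 := hKb N (PowerSeries.mk fun k => a k / (β k : ℂ))
    have h2 := lp.sum_rpow_le_norm_rpow (by norm_num) a (Finset.range N)
    simp only [ENNReal.toReal_ofNat, Real.rpow_two] at h2 ⊢
    rw [mul_pow, Real.sq_sqrt hK]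
    refine le_trans (le_of_eq ?_) (h1.trans (mul_le_mul_of_nonneg_left
      (le_trans (le_of_eq ?_) h2) hK))
    · refine Finset.sum_congr rfl fun i _ => ?_
      rw [norm_mul, mul_pow, Complex.norm_real, Real.norm_of_nonneg (hβ i).le]
    · refine Finset.sum_congr rfl fun i _ => ?_
      have := (hβ i).ne'
      simp [div_pow]
      field_simp
  let T0 : H2 →ₗ[ℂ] H2 :=
    { toFun := fun a => ⟨fun n => (β n : ℂ) * PowerSeries.coeff n
        (PowerSeries.subst b (PowerSeries.mk fun k => a k / (β k : ℂ))), memℓp_gen' (hbd a)⟩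
      map_add' := fun x y => by
        ext n
        have : (PowerSeries.mk fun k => (x + y : H2) k / (β k : ℂ)) =
          (PowerSeries.mk fun k => x k / (β k : ℂ)) + (PowerSeries.mk fun k => y k / (β k : ℂ)) := by
          ext k; simp [add_div]
        change (β n : ℂ) * PowerSeries.coeff n (PowerSeries.subst b
          (PowerSeries.mk fun k => (x + y : H2) k / (β k : ℂ))) = (β n : ℂ) * _ + (β n : ℂ) * _
        rw [this, PowerSeries.subst_add hsub, map_add, mul_add]
      map_smul' := fun r x => by
        ext n
        have : (PowerSeries.mk fun k => (r • x : H2) k / (β k : ℂ)) =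
          r • (PowerSeries.mk fun k => x k / (β k : ℂ)) := by
          ext k; simp [mul_div_assoc]
        change (β n : ℂ) * PowerSeries.coeff n (PowerSeries.subst b
          (PowerSeries.mk fun k => (r • x : H2) k / (β k : ℂ))) = r * ((β n : ℂ) * _)
        rw [this, PowerSeries.subst_smul hsub, PowerSeries.coeff_smul, smul_eq_mul]
        ring }
  let T : H2 →L[ℂ] H2 := T0.mkContinuous (√K) fun a =>
    lp.norm_le_of_forall_sum_le (by norm_num) (by positivity) (hbd a)
  have hT : ∀ a n, T a n = (β n : ℂ) * PowerSeries.coeff n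
        (PowerSeries.subst b (PowerSeries.mk fun k => a k / (β k : ℂ))) := fun a n => rfl
  refine ⟨T, fun a z hzd => ?_⟩
  have hz1 : ‖z‖ < 1 := by simpa [unitDisk] using hzd
  have hBz1 : ‖B z‖ < 1 := by rw [hBz]; exact bla_lt hm hc zs hz hz1
  obtain ⟨L1, hL1⟩ := eval_clm hβ hnice hz1
  obtain ⟨L2, hL2⟩ := eval_clm hβ hnice hBz1
  suffices h : L1.comp T = L2 by
    rw [← hL1, ← hL2, ← h]; rfl
  refine lp.ext_continuousLinearMap (by simp) fun k => ?_
  refine ContinuousLinearMap.ext_ring ?_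
  change L1 (T (lp.single 2 k (1:ℂ))) = L2 (lp.single 2 k (1:ℂ))
  rw [hL1, hL2]
  have hβc : ∀ n, (β n : ℂ) ≠ 0 := fun n => by exact_mod_cast (hβ n).ne'
  have hmk : (PowerSeries.mk fun j => (lp.single 2 k (1:ℂ) : H2) j / (β j : ℂ)) =
      ((β k : ℂ)⁻¹) • (PowerSeries.X ^ k : PowerSeries ℂ) := by
    ext j
    by_cases hj : j = k
    · subst hj; simp
    · simp [PowerSeries.coeff_X_pow, hj]
  unfold repFun
  have e : ∀ n, T (lp.single 2 k (1:ℂ)) n / (β n : ℂ) * z ^ n =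
      (β k : ℂ)⁻¹ * (PowerSeries.coeff n (b ^ k) * z ^ n) := fun n => by
    rw [hT, hmk, PowerSeries.subst_smul hsub, PowerSeries.subst_pow hsub, PowerSeries.subst_X hsub]
    have := hβc n
    simp
    field_simp
  simp only [e]
  rw [tsum_mul_left, ((hev.pow k) z hz1).2]
  have e1 : (lp.single 2 k (1:ℂ) : H2) k = 1 :=
    lp.single_apply_self (E := fun _ : ℕ => ℂ) 2 k (1:ℂ)
  have e2 : ∀ j, j ≠ k → (lp.single 2 k (1:ℂ) : H2) j / (β j : ℂ) * B z ^ j = 0 := fun j hj => by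
    have : (lp.single 2 k (1:ℂ) : H2) j = 0 :=
      lp.single_apply_ne (E := fun _ : ℕ => ℂ) 2 k (1:ℂ) hj
    rw [this, zero_div, zero_mul]
  refine Eq.trans ?_ (tsum_eq_single k e2).symm
  rw [e1]
  simp
end
end
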